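/- For every integer d ≥ 2, the asymptotic repetition threshold of the class of recurrent rich d-ary sequences equals 2; that is, (i) every recurrent rich sequence u over a d-letter alphabet satisfies E*(u) ≥ 2, and (ii) for every ε > 0 there exists a recurrent rich sequence u over a d-letter alphabet with E*(u) < 2 + ε. -/

import Mathlib

namespace RichRT

variable {A : Type*}

/-- The word `w` occurs in the sequence `u` at position `j`. -/
def OccursAt (w : List A) (u : ℕ → A) (j : ℕ) : Prop :=
  w = (List.range w.length).map fun t => u (j + t)

/-- `w` is a factor of the infinite sequence `u`. -/
def IsFactorS (w : List A) (u : ℕ → A) : Prop :=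
  ∃ j : ℕ, OccursAt w u j

/-- `u` is recurrent: every factor occurs infinitely often. -/
def Recurrent (u : ℕ → A) : Prop :=
  ∀ w : List A, IsFactorS w u → ∀ N : ℕ, ∃ j, N ≤ j ∧ OccursAt w u j

/-- The number of distinct palindromic factors of a finite word. -/
noncomputable def palCount (w : List A) : ℕ :=
  Set.ncard {p : List A | p <:+: w ∧ p.reverse = p}

/-- A finite word of length `n` is rich if it has exactly `n+1` palindromic factors. -/
def RichWord (w : List A) : Prop := palCount w = w.length + 1

/-- A sequence is rich if all its factors are rich. -/
def RichSeq (u : ℕ → A) : Prop := ∀ w : List A, IsFactorS w u → RichWord w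

/-- The prefix of length `k` of the periodic sequence `vvv⋯`. -/
def powPref (v : List A) (k : ℕ) : List A := ((List.replicate k v).flatten).take k

/-- The set of exponents `k/|v|` of fractional powers `v^(k/|v|)` occurring in `u`,
with `|v| ≥ n`. -/
def expSet (u : ℕ → A) (n : ℕ) : Set ℝ :=
  {x | ∃ (v : List A) (k : ℕ), v ≠ [] ∧ n ≤ v.length ∧
    IsFactorS (powPref v k) u ∧ x = (k : ℝ) / (v.length : ℝ)}

/-- The critical exponent of a sequence, with values in `EReal`. -/
noncomputable def critExp (u : ℕ → A) : EReal :=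
  sSup ((fun x : ℝ => (x : EReal)) '' expSet u 0)

/-- The asymptotic critical exponent of a sequence: `⊤` if the critical exponent is `⊤`,
otherwise the limit (= infimum, by monotonicity) over `n` of the suprema of exponents of
powers `v^e` with `|v| ≥ n`. -/
noncomputable def acritExp (u : ℕ → A) : EReal :=
  if critExp u = ⊤ then ⊤
  else ⨅ n : ℕ, sSup ((fun x : ℝ => (x : EReal)) '' expSet u n)

/-- The morphism `φ_d` on letters: `i ↦ 0(i+1)` for `i < d-1`, `d-1 ↦ 0(d-1)(d-1)`. -/
def phiL (d : ℕ) (i : ℕ) : List ℕ :=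
  if i < d - 1 then [0, i + 1] else [0, d - 1, d - 1]

/-- The morphism `φ_d` on words. -/
def phiW (d : ℕ) (w : List ℕ) : List ℕ := w.flatMap (phiL d)

/-- `u` is the fixed point of `φ_d`: it begins with `0` and `φ_d(u) = u`, i.e. the image
of every prefix of `u` is again a prefix of `u`. -/
def IsPhiFixed (d : ℕ) (u : ℕ → ℕ) : Prop :=
  u 0 = 0 ∧ ∀ m : ℕ, OccursAt (phiW d ((List.range m).map u)) u 0

/-- Left extensions of `w` in `u`. -/
def Lext (u : ℕ → ℕ) (w : List ℕ) : Set (List ℕ) :=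
  {x | ∃ i : ℕ, x = i :: w ∧ IsFactorS x u}

/-- Right extensions of `w` in `u`. -/
def Rext (u : ℕ → ℕ) (w : List ℕ) : Set (List ℕ) :=
  {x | ∃ i : ℕ, x = w ++ [i] ∧ IsFactorS x u}

/-- Both-sided extensions of `w` in `u`. -/
def Bext (u : ℕ → ℕ) (w : List ℕ) : Set (List ℕ) :=
  {x | ∃ i j : ℕ, x = i :: (w ++ [j]) ∧ IsFactorS x u}

/-- `w` is a bispecial factor of `u`. -/
def Bispecial (u : ℕ → ℕ) (w : List ℕ) : Prop :=
  IsFactorS w u ∧ 2 ≤ (Lext u w).ncard ∧ 2 ≤ (Rext u w).ncard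

/-- The bilateral order `b(w) = #Bext(w) − #Lext(w) − #Rext(w) + 1`. -/
noncomputable def bord (u : ℕ → ℕ) (w : List ℕ) : ℤ :=
  ((Bext u w).ncard : ℤ) - ((Lext u w).ncard : ℤ) - ((Rext u w).ncard : ℤ) + 1

/-- The palindromes `F_0 = ε`, `F_i = φ(F_{i-1})0`. -/
def Fword (d : ℕ) : ℕ → List ℕ
  | 0 => []
  | i + 1 => phiW d (Fword d i) ++ [0]

/-- Membership in the set `𝒯` of bispecial triplets. -/
def TripleMem (d : ℕ) (u : ℕ → ℕ) (t : ℕ × List ℕ × ℕ) : Prop :=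
  Bispecial u t.2.1 ∧ t.1 < d - 1 ∧ t.2.2 < d - 1 ∧
    IsFactorS (t.1 :: t.2.1) u ∧ IsFactorS (t.2.1 ++ [t.2.2]) u

/-- The map `f` on triplets. -/
def fmap (d : ℕ) (t : ℕ × List ℕ × ℕ) : ℕ × List ℕ × ℕ :=
  ((t.1 + 1) % (d - 1),
   (if t.1 = d - 2 then [d - 1] else []) ++ phiW d t.2.1 ++ [0] ++
     (if t.2.2 = d - 2 then [d - 1] else []),
   (t.2.2 + 1) % (d - 1))

/-- The initial triplets `T_k = (0, ε, k)` for `k ≤ d-2` and `T_{d-1} = (0, d-1, 0)`. -/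
def Tinit (d k : ℕ) : ℕ × List ℕ × ℕ :=
  if k = d - 1 then (0, [d - 1], 0) else (0, ([] : List ℕ), k)

/-- The Parikh vector of a word. -/
def parikh (d : ℕ) (w : List ℕ) : Fin d → ℕ := fun i => w.count (i : ℕ)

/-- The incidence matrix of `φ_d`. -/
def Mmat (d : ℕ) : Matrix (Fin d) (Fin d) ℕ := fun i j => (phiL d (j : ℕ)).count (i : ℕ)

/-- `r` is a return word to `w` in `u`. -/
def ReturnWord (u : ℕ → ℕ) (w r : List ℕ) : Prop :=
  ∃ j ℓ : ℕ, j < ℓ ∧ OccursAt w u j ∧ OccursAt w u ℓ ∧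
    (∀ m, j < m → m < ℓ → ¬ OccursAt w u m) ∧
    r = (List.range (ℓ - j)).map fun t => u (j + t)

/-- `R` is a complete return word to `w` in `u`. -/
def CompleteReturn (u : ℕ → ℕ) (w R : List ℕ) : Prop :=
  ∃ r : List ℕ, ReturnWord u w r ∧ R = r ++ w

-- HELPERS

/-- `v` is the image of `u` under `z ↦ 0 (b z)^(m z)`, with block starts `ρ`. -/
structure Img (m b u v ρ : ℕ → ℕ) : Prop where
  z : ρ 0 = 0
  s : ∀ n, ρ (n+1) = ρ n + 1 + m (u n)
  v0 : ∀ n, v (ρ n) = 0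
  vb : ∀ n t, t < m (u n) → v (ρ n + 1 + t) = b (u n)
  hm : ∀ z, 1 ≤ m z
  hb : ∀ z, b z ≠ 0
  inj : ∀ i j, m (u i) = m (u j) → b (u i) = b (u j) → u i = u j

def RMb (u : ℕ → ℕ) (N : ℕ) : Prop :=
  ∀ (K : Set ℕ) (x' x k : ℕ), x' < x → x + k ≤ N → u x' ∈ K → u (x'+k) ∈ K → u x ∈ K →
    u (x+k) ∈ K → (∀ s, 0 < s → s < k → u (x'+s) = u (x+s)) →
    (∀ s, 0 < s → s < k → u (x+s) = u (x+k-s)) →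
    ∃ a, x' ≤ a ∧ a < x ∧ u a ∈ K ∧ ∀ s, a < s → s < x + k → u s = u (a + (x + k) - s)

namespace Img
variable {m b u v ρ : ℕ → ℕ}

lemma mono (I : Img m b u v ρ) : StrictMono ρ := by
  apply strictMono_nat_of_lt_succ
  intro n; rw [I.s]; omega

lemma le2 (I : Img m b u v ρ) (n : ℕ) : 2 * n ≤ ρ n := by
  induction n with
  | zero => simp
  | succ n ih => rw [I.s]; have := I.hm (u n); omega

lemma lt_iff (I : Img m b u v ρ) {i j : ℕ} : ρ i < ρ j ↔ i < j := I.mono.lt_iff_lt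
lemma le_iff (I : Img m b u v ρ) {i j : ℕ} : ρ i ≤ ρ j ↔ i ≤ j := I.mono.le_iff_le

lemma loc (I : Img m b u v ρ) (x : ℕ) : ∃ n t, x = ρ n + t ∧ t ≤ m (u n) := by
  induction x with
  | zero => exact ⟨0, 0, by simp [I.z], by simp⟩
  | succ x ih =>
    obtain ⟨n, t, h1, h2⟩ := ih
    by_cases h : t < m (u n)
    · exact ⟨n, t+1, by omega, by omega⟩
    · refine ⟨n+1, 0, ?_, by omega⟩
      rw [I.s]; omega

/-- the letters of the block followed by `0` -/
def r (m b : ℕ → ℕ) (z t : ℕ) : ℕ := if t < m z then b z else 0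

lemma right (I : Img m b u v ρ) (n t : ℕ) (h : t ≤ m (u n)) : v (ρ n + 1 + t) = r m b (u n) t := by
  unfold r
  split_ifs with h1
  · exact I.vb n t h1
  · have : t = m (u n) := by omega
    subst this
    rw [← I.s, I.v0]

lemma left (I : Img m b u v ρ) (n t x : ℕ) (h : t ≤ m (u n)) (hx : x + 1 + t = ρ (n+1)) :
    v x = r m b (u n) t := by
  unfold r
  rw [I.s] at hx
  split_ifs with h1
  · have : x = ρ n + 1 + (m (u n) - 1 - t) := by omega
    rw [this]; apply I.vb; omega
  · have : x = ρ n := by omega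
    rw [this, I.v0]

lemma nz (I : Img m b u v ρ) (n t : ℕ) (h : t < m (u n)) : v (ρ n + 1 + t) ≠ 0 := by
  rw [I.vb n t h]; exact I.hb _

lemma nz' (I : Img m b u v ρ) (n x : ℕ) (h : ρ n < x) (h2 : x < ρ (n+1)) : v x = b (u n) := by
  rw [I.s] at h2
  have := I.vb n (x - ρ n - 1) (by omega)
  rwa [show ρ n + 1 + (x - ρ n - 1) = x by omega] at this

lemma zero (I : Img m b u v ρ) {x : ℕ} (h : v x = 0) : ∃ n, x = ρ n := by
  obtain ⟨n, t, h1, h2⟩ := I.loc x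
  rcases Nat.eq_zero_or_pos t with h0 | h0
  · exact ⟨n, by omega⟩
  · exfalso
    apply I.nz n (t-1) (by omega)
    rw [show ρ n + 1 + (t-1) = x by omega]; exact h

/-- no zero strictly between gives position bound -/
lemma between (I : Img m b u v ρ) {n x : ℕ} (h : ρ n ≤ x) (hz : ∀ y, ρ n < y → y ≤ x → v y ≠ 0) :
    x < ρ (n+1) := by
  by_contra hc
  exact hz (ρ (n+1)) (I.lt_iff.2 (by omega)) (by omega) (I.v0 _)

lemma before (I : Img m b u v ρ) {n x : ℕ} (h : x ≤ ρ (n+1)) (hz : ∀ y, x ≤ y → y < ρ (n+1) → v y ≠ 0) :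
    ρ n < x := by
  by_contra hc
  exact hz (ρ n) (by omega) (I.lt_iff.2 (by omega)) (I.v0 _)

lemma decode (I : Img m b u v ρ) {a a' : ℕ}
    (h : ∀ s, s ≤ 1 + m (u a) → v (ρ a + s) = v (ρ a' + s)) : u a = u a' := by
  have hmm := I.hm (u a)
  have hmm' := I.hm (u a')
  have h1 : ρ a' + m (u a) < ρ (a'+1) := by
    apply I.between (by omega)
    intro y h1 h2
    have := h (y - ρ a') (by omega)
    rw [show ρ a' + (y - ρ a') = y by omega] at this
    rw [← this, show ρ a + (y - ρ a') = ρ a + 1 + (y - ρ a' - 1) by omega]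
    apply I.nz; omega
  have h2 := h (1 + m (u a)) le_rfl
  rw [← add_assoc, ← I.s, I.v0] at h2
  obtain ⟨c, hc⟩ := I.zero h2.symm
  have h3 : a' < c := by rw [← I.lt_iff]; omega
  have h4 : ρ (a'+1) ≤ ρ c := I.le_iff.2 h3
  rw [I.s] at h1 h4
  apply I.inj
  · omega
  · have := h 1 (by omega)
    rw [show ρ a + 1 = ρ a + 1 + 0 by omega, show ρ a' + 1 = ρ a' + 1 + 0 by omega, I.vb _ _ (by omega), I.vb _ _ (by omega)] at this
    exact this

lemma decodeR (I : Img m b u v ρ) {a a' : ℕ} (hle : 1 + m (u a) ≤ ρ (a'+1))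
    (h : ∀ s, s ≤ 1 + m (u a) → v (ρ a + s) = v (ρ (a'+1) - s)) : u a = u a' := by
  have hmm := I.hm (u a)
  have hmm' := I.hm (u a')
  have h1 : ρ a' < ρ (a'+1) - m (u a) := by
    apply I.before (by omega)
    intro y h1 h2
    have := h (ρ (a'+1) - y) (by omega)
    rw [show ρ (a'+1) - (ρ (a'+1) - y) = y by omega] at this
    rw [← this, show ρ a + (ρ (a'+1) - y) = ρ a + 1 + (ρ (a'+1) - y - 1) by omega]
    apply I.nz; omega
  have h2 := h (1 + m (u a)) le_rfl
  rw [← add_assoc, ← I.s, I.v0] at h2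
  obtain ⟨c, hc⟩ := I.zero h2.symm
  have h3 : c < a' + 1 := by rw [← I.lt_iff]; omega
  have h4 : ρ c ≤ ρ a' := I.le_iff.2 (by omega)
  have h5 := I.s a'
  apply I.inj
  · omega
  · have := h 1 (by omega)
    rw [show ρ a + 1 = ρ a + 1 + 0 by omega, I.vb _ _ (by omega)] at this
    rw [this]
    exact I.nz' a' _ (by omega) (by omega)

/-- reflection of blocks -/
lemma refl_pos (I : Img m b u v ρ) {a n : ℕ} (hp : ∀ i, a ≤ i → i < n → u i = u (a + n - 1 - i)) :
    ∀ i, a + i ≤ n → ρ (a+i) + ρ (n - i) = ρ a + ρ n := by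
  intro i
  induction i with
  | zero => intro _; simp
  | succ i ih =>
    intro h
    have h1 := ih (by omega)
    have h2 := hp (a+i) (by omega) (by omega)
    have h3 := I.s (a+i)
    have h4 := I.s (n-i-1)
    rw [show n - i - 1 + 1 = n - i by omega] at h4
    rw [show a + n - 1 - (a+i) = n - i - 1 by omega] at h2
    rw [← h2] at h4
    rw [show a + (i+1) = a+i+1 by omega, show n - (i+1) = n - i - 1 by omega]
    omega

lemma pal_img (I : Img m b u v ρ) {a n t x : ℕ} (han : a < n)
    (hp : ∀ s, a < s → s < n → u s = u (a + n - s))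
    (ha : t ≤ m (u a)) (hn : t ≤ m (u n)) (hr : ∀ s, s < t → r m b (u a) s = r m b (u n) s)
    (hx : x + 1 + t = ρ (a+1)) :
    ∀ s, x < s → s < ρ n + 1 + t → v s = v (x + (ρ n + 1 + t) - s) := by
  have hp' : ∀ i, a + 1 ≤ i → i < n → u i = u (a + 1 + n - 1 - i) := by
    intro i h1 h2
    rw [hp i (by omega) h2]; congr 1; omega
  intro s h1 h2
  have hle : ρ (a+1) ≤ ρ n := I.le_iff.2 han
  rcases lt_or_ge s (ρ (a+1)) with h3 | h3
  · -- left tail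
    rw [I.left a (ρ (a+1) - 1 - s) s (by omega) (by omega)]
    rw [show x + (ρ n + 1 + t) - s = ρ n + 1 + (ρ (a+1) - 1 - s) by omega, I.right _ _ (by omega)]
    exact hr _ (by omega)
  · rcases lt_or_ge (ρ n) s with h4 | h4
    · rw [I.left a (s - ρ n - 1) (x + (ρ n + 1 + t) - s) (by omega) (by omega), hr _ (by omega)]
      rw [← I.right n _ (by omega)]
      congr 1; omega
    · obtain ⟨i, q, hi, hq⟩ := I.loc s
      have hia : a + 1 ≤ i := by
        by_contra hc
        have : ρ (i+1) ≤ ρ (a+1) := I.le_iff.2 (by omega)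
        have := I.s i
        omega
      have hin : i ≤ n := by rw [← I.le_iff]; omega
      have hR := I.refl_pos hp' (i - (a+1)) (by omega)
      rw [show a + 1 + (i - (a+1)) = i by omega] at hR
      rcases Nat.eq_zero_or_pos q with h0 | h0
      · rw [show s = ρ i by omega, I.v0]
        rw [show x + (ρ n + 1 + t) - ρ i = ρ (n - (i - (a+1))) by omega, I.v0]
      · have hin' : i < n := by
          rcases eq_or_lt_of_le hin with h | h
          · subst h; omega
          · exact h
        have hu := hp' i hia hin'
        rw [show s = ρ i + 1 + (q-1) by omega, I.right _ _ (by omega)]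
        rw [I.left (n - (i - (a+1)) - 1) (q-1), hu]
        · congr 2; omega
        · rw [show n - (i - (a+1)) - 1 = a + 1 + n - 1 - i by omega, ← hu]; omega
        · rw [show n - (i - (a+1)) - 1 + 1 = n - (i - (a+1)) by omega]; omega

lemma lift (I : Img m b u v ρ) {N : ℕ} (IH : RMb u N) (K : Set ℕ) {n M M' t x x' : ℕ}
    (hn : n ≤ N) (hM : M ≤ n) (hMM : M' < M)
    (h1 : t ≤ m (u M') ∧ (∀ s, s < t → r m b (u M') s = r m b (u n) s) ∧ r m b (u M') t ∈ K)
    (h2 : t ≤ m (u (M'+(n-M))) ∧ (∀ s, s < t → r m b (u (M'+(n-M))) s = r m b (u n) s) ∧ r m b (u (M'+(n-M))) t ∈ K)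
    (h3 : t ≤ m (u M) ∧ (∀ s, s < t → r m b (u M) s = r m b (u n) s) ∧ r m b (u M) t ∈ K)
    (h4 : t ≤ m (u n) ∧ r m b (u n) t ∈ K)
    (he : ∀ s, 0 < s → s < n - M → u (M'+s) = u (M+s))
    (hp : ∀ s, 0 < s → s < n - M → u (M+s) = u (n-s))
    (hx' : x' + 1 + t ≤ ρ (M'+1)) (hx : ρ M ≤ x + t) :
    ∃ a, x' ≤ a ∧ a < x ∧ v a ∈ K ∧
      ∀ s, a < s → s < ρ n + 1 + t → v s = v (a + (ρ n + 1 + t) - s) := by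
  obtain ⟨a, ha1, ha2, ⟨ha3, ha4, ha5⟩, ha6⟩ := IH
    {z | t ≤ m z ∧ (∀ s, s < t → r m b z s = r m b (u n) s) ∧ r m b z t ∈ K} M' M (n - M) hMM
    (by omega) h1 h2 h3
    (by rw [show M + (n-M) = n by omega]; exact ⟨h4.1, fun _ _ => rfl, h4.2⟩) he
    (by intro s hs1 hs2; rw [hp s hs1 hs2]; congr 1; omega)
  rw [show M + (n-M) = n by omega] at ha6
  have e1 : ρ (M'+1) ≤ ρ (a+1) := I.le_iff.2 (by omega)
  have e2 : ρ (a+1) ≤ ρ M := I.le_iff.2 (by omega)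
  refine ⟨ρ (a+1) - 1 - t, by omega, by omega, ?_, ?_⟩
  · rw [I.left a t _ ha3 (by omega)]; exact ha5
  · exact I.pal_img (by omega) ha6 ha3 h4.1 ha4 (by omega)

end Img

namespace Img
variable {m b u v ρ : ℕ → ℕ}

lemma img_RM_A (I : Img m b u v ρ) {N : ℕ} (IH : RMb u N) (K : Set ℕ) {x' x k n t : ℕ}
    (hlt : x' < x) (hn : n ≤ N) (k1 : v x' ∈ K) (k2 : v (x'+k) ∈ K) (k3 : v x ∈ K)
    (k4 : v (x+k) ∈ K) (he : ∀ s, 0 < s → s < k → v (x'+s) = v (x+s))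
    (hp : ∀ s, 0 < s → s < k → v (x+s) = v (x+k-s))
    (hy : x + k = ρ n + 1 + t) (ht : t ≤ m (u n)) (hx : x < ρ n) :
    ∃ a, x' ≤ a ∧ a < x ∧ v a ∈ K ∧ ∀ s, a < s → s < x + k → v s = v (a + (x + k) - s) := by
  have nzx : ∀ s, 0 < s → s ≤ t → v (x+s) ≠ 0 := by
    intro s h1 h2
    rw [hp s h1 (by omega), show x + k - s = ρ n + 1 + (t - s) by omega]
    exact I.nz n _ (by omega)
  have z1 : v (x+(1+t)) = 0 := by
    rw [hp (1+t) (by omega) (by omega), show x + k - (1+t) = ρ n by omega, I.v0]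
  have z1' : v (x'+(1+t)) = 0 := by
    rw [he (1+t) (by omega) (by omega), z1]
  obtain ⟨c, hc⟩ := I.zero z1
  obtain ⟨c', hc'⟩ := I.zero z1'
  obtain ⟨M, rfl⟩ : ∃ M, c = M + 1 := by
    refine ⟨c-1, ?_⟩
    rcases Nat.eq_zero_or_pos c with h | h
    · rw [h, I.z] at hc; omega
    · omega
  obtain ⟨M', rfl⟩ : ∃ M, c' = M + 1 := by
    refine ⟨c'-1, ?_⟩
    rcases Nat.eq_zero_or_pos c' with h | h
    · rw [h, I.z] at hc'; omega
    · omega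
  have bM : ρ M < x + 1 := by
    apply I.before (by omega)
    intro y h1 h2
    have := nzx (y - x) (by omega) (by omega)
    rwa [show x + (y - x) = y by omega] at this
  have bM' : ρ M' < x' + 1 := by
    apply I.before (by omega)
    intro y h1 h2
    have := nzx (y - x') (by omega) (by omega)
    rw [← he _ (by omega) (by omega)] at this
    rwa [show x' + (y - x') = y by omega] at this
  have sM := I.s M
  have sM' := I.s M'
  have hMn : M + 1 ≤ n := by
    rw [← I.le_iff]
    by_contra hcon
    apply I.nz n (x + t - ρ n) (by omega)
    rw [show ρ n + 1 + (x + t - ρ n) = x + (1+t) by omega]; exact z1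
  have hMM : M' < M := by
    have : M' + 1 < M + 1 := by rw [← I.lt_iff]; omega
    omega
  have eqb : ∀ i, M+1+i < n → ρ (M'+1+i) + x = x' + ρ (M+1+i) → u (M'+1+i) = u (M+1+i) := by
    intro i h1 h2
    symm
    apply I.decode
    intro s hs
    have g1 := I.s (M+1+i)
    have g2 : ρ (M+1+i+1) ≤ ρ n := I.le_iff.2 (by omega)
    have g3 : ρ (M+1) ≤ ρ (M+1+i) := I.le_iff.2 (by omega)
    have := he (ρ (M+1+i) + s - x) (by omega) (by omega)
    rw [show x + (ρ (M+1+i) + s - x) = ρ (M+1+i) + s by omega,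
      show x' + (ρ (M+1+i) + s - x) = ρ (M'+1+i) + s by omega] at this
    exact this.symm
  have eqρ : ∀ i, M+1+i ≤ n → ρ (M'+1+i) + x = x' + ρ (M+1+i) := by
    intro i
    induction i with
    | zero => intro _; simp only [add_zero]; omega
    | succ i ih =>
      intro h
      have h1 := ih (by omega)
      have h2 := eqb i (by omega) h1
      have g1 := I.s (M+1+i)
      have g2 := I.s (M'+1+i)
      rw [h2] at g2
      rw [show M + 1 + (i+1) = M+1+i+1 by omega, show M' + 1 + (i+1) = M'+1+i+1 by omega]
      omega
  have plb : ∀ i, M+1+i < n → ρ (M+1+i) + ρ (n-i) = x + (x+k) → u (M+1+i) = u (n-1-i) := by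
    intro i h1 h2
    have g1 := I.s (M+1+i)
    have g2 : ρ (M+1+i+1) ≤ ρ n := I.le_iff.2 (by omega)
    have g3 : ρ (M+1) ≤ ρ (M+1+i) := I.le_iff.2 (by omega)
    apply I.decodeR
    · rw [show n - 1 - i + 1 = n - i by omega]; omega
    · intro s hs
      rw [show n - 1 - i + 1 = n - i by omega]
      have := hp (ρ (M+1+i) + s - x) (by omega) (by omega)
      rw [show x + (ρ (M+1+i) + s - x) = ρ (M+1+i) + s by omega] at this
      rw [this]; congr 1; omega
  have plρ : ∀ i, M+1+i ≤ n → ρ (M+1+i) + ρ (n-i) = x + (x+k) := by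
    intro i
    induction i with
    | zero => intro _; simp only [add_zero, Nat.sub_zero]; omega
    | succ i ih =>
      intro h
      have h1 := ih (by omega)
      have h2 := plb i (by omega) h1
      have g1 := I.s (M+1+i)
      have g2 := I.s (n-1-i)
      rw [← h2, show n - 1 - i + 1 = n - i by omega] at g2
      rw [show M + 1 + (i+1) = M+1+i+1 by omega, show n - (i+1) = n-1-i by omega]
      omega
  have hn'' := eqρ (n - (M+1)) (by omega)
  rw [show M + 1 + (n - (M+1)) = n by omega, show M' + 1 + (n - (M+1)) = M' + (n-M) by omega] at hn''
  have b'' : ρ (M'+(n-M)) + t < ρ (M'+(n-M)+1) := by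
    apply I.between (by omega)
    intro y h1 h2
    have := he (y - x') (by omega) (by omega)
    rw [show x' + (y - x') = y by omega] at this
    rw [this, show x + (y-x') = ρ n + 1 + (y - ρ (M'+(n-M)) - 1) by omega]
    exact I.nz n _ (by omega)
  have s'' := I.s (M'+(n-M))
  have h4t : r m b (u n) t ∈ K := by
    rw [← I.right n t ht, ← hy]; exact k4
  rw [hy]
  apply I.lift IH K hn (show M ≤ n by omega) hMM (t := t)
  · refine ⟨by omega, ?_, ?_⟩
    · intro s hs
      rw [← I.left M' s (x' + (t - s)) (by omega) (by omega), he _ (by omega) (by omega),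
        hp _ (by omega) (by omega), ← I.right n s (by omega)]
      congr 1; omega
    · rw [← I.left M' t x' (by omega) (by omega)]; exact k1
  · refine ⟨by omega, ?_, ?_⟩
    · intro s hs
      have := he (ρ n + 1 + s - x) (by omega) (by omega)
      rw [← I.right _ s (by omega), ← I.right n s (by omega)]
      rw [show x + (ρ n + 1 + s - x) = ρ n + 1 + s by omega] at this
      rw [← this]; congr 1; omega
    · rw [← I.right _ t (by omega), show ρ (M'+(n-M)) + 1 + t = x' + k by omega]; exact k2
  · refine ⟨by omega, ?_, ?_⟩
    · intro s hs
      rw [← I.left M s (x + (t - s)) (by omega) (by omega),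
        hp _ (by omega) (by omega), ← I.right n s (by omega)]
      congr 1; omega
    · rw [← I.left M t x (by omega) (by omega)]; exact k3
  · exact ⟨ht, h4t⟩
  · intro s h1 h2
    have := eqb (s-1) (by omega) (eqρ _ (by omega))
    rwa [show M' + 1 + (s-1) = M' + s by omega, show M + 1 + (s-1) = M + s by omega] at this
  · intro s h1 h2
    have := plb (s-1) (by omega) (plρ _ (by omega))
    rwa [show n - 1 - (s-1) = n - s by omega, show M + 1 + (s-1) = M + s by omega] at this
  · omega
  · omega

lemma img_RM (I : Img m b u v ρ) {h : ℕ} (hh : ∀ z, 2 ≤ m z → b z = h) {N : ℕ} (IH : RMb u N) :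
    RMb v (N+1) := by
  intro K x' x k hlt hN k1 k2 k3 k4 he hp
  obtain ⟨n, t, hy, ht⟩ := I.loc (x+k-1)
  replace hy : x + k = ρ n + 1 + t := by omega
  have hn2 := I.le2 n
  rcases lt_or_ge x (ρ n) with hx | hx
  · exact I.img_RM_A IH K hlt (by omega) k1 k2 k3 k4 he hp hy ht hx
  have sn := I.s n
  have inb : ∀ s, ρ n < s → s < x + k → v s = b (u n) := by
    intro s h1 h2
    exact I.nz' n s h1 (by omega)
  by_cases hE : ∃ a, x' ≤ a ∧ ρ n ≤ a ∧ a < x ∧ v a ∈ K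
  · obtain ⟨a, e1, e2, e3, e4⟩ := hE
    refine ⟨a, e1, e3, e4, ?_⟩
    intro s h1 h2
    rw [inb s (by omega) h2, inb _ (by omega) (by omega)]
  push Not at hE
  have hx'n : x' < ρ n := by
    by_contra hc
    exact hE x' le_rfl (by omega) hlt k1
  have h4t : r m b (u n) t ∈ K := by
    rw [← I.right n t ht, ← hy]; exact k4
  obtain ⟨M', j, hj, hjm⟩ := I.loc x'
  have hM'n : M' < n := by rw [← I.lt_iff]; omega
  have sM' := I.s M'
  have hx1 : x ≤ ρ n + 1 := by
    by_contra hc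
    by_cases hl : x < ρ n + 1 + m (u n)
    · apply hE (x-1) (by omega) (by omega) (by omega)
      rw [I.nz' n (x-1) (by omega) (by omega), ← I.nz' n x (by omega) (by omega)]
      exact k3
    · apply hE (ρ n) (by omega) (by omega) (by omega)
      rw [I.v0]
      rw [show x = ρ (n+1) by omega, I.v0] at k3; exact k3
  rcases eq_or_lt_of_le hx with hx0 | hx0
  · -- x = ρ n
    have h0K : 0 ∈ K := by rw [← hx0, I.v0] at k3; exact k3
    have hb1 : x' + t < ρ (M'+1) := by
      apply I.between (by omega)
      intro y h1 h2
      rcases le_or_gt y x' with h3 | h3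
      · rw [I.nz' M' y h1 (by omega)]; exact I.hb _
      · have := he (y - x') (by omega) (by omega)
        rw [show x' + (y - x') = y by omega] at this
        rw [this, inb _ (by omega) (by omega)]; exact I.hb _
    have P1 : t ≤ m (u M') ∧ (∀ s, s < t → r m b (u M') s = r m b (u n) s) ∧ r m b (u M') t ∈ K := by
      refine ⟨by omega, ?_, ?_⟩
      · intro s hs
        unfold r
        rw [if_pos (by omega), if_pos (by omega)]
        have := he 1 (by omega) (by omega)
        rw [I.nz' M' (x'+1) (by omega) (by omega), inb _ (by omega) (by omega)] at this
        exact this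
      · unfold r
        split_ifs with h1
        · by_cases h2 : ρ M' < x'
          · rw [← I.nz' M' x' h2 (by omega)]; exact k1
          · rw [← I.nz' M' (x'+k) (by omega) (by omega)]; exact k2
        · exact h0K
    rw [hy]
    apply I.lift IH K (show n ≤ N by omega) le_rfl hM'n (t := t) P1
    · rw [Nat.sub_self, add_zero]; exact P1
    · exact ⟨ht, fun _ _ => rfl, h4t⟩
    · exact ⟨ht, h4t⟩
    · intro s h1 h2; omega
    · intro s h1 h2; omega
    · omega
    · omega
  · have hxe : x = ρ n + 1 := by omega
    have h0K : 0 ∉ K := by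
      have := hE (ρ n) (by omega) le_rfl (by omega)
      rwa [I.v0] at this
    have htm : t < m (u n) := by
      by_contra hc
      unfold r at h4t
      rw [if_neg hc] at h4t
      exact h0K h4t
    have hj0 : ρ M' < x' := by
      rcases Nat.eq_zero_or_pos j with h | h
      · exfalso
        rw [show x' = ρ M' by omega, I.v0] at k1
        exact h0K k1
      · omega
    have hb1 : x' + t < ρ (M'+1) := by
      apply I.between (by omega)
      intro y h1 h2
      rcases le_or_gt y x' with h3 | h3
      · rw [I.nz' M' y h1 (by omega)]; exact I.hb _
      · rcases eq_or_lt_of_le h2 with h4 | h4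
        · rw [h4, show x' + t = x' + k by omega]
          intro h5; rw [h5] at k2; exact h0K k2
        · have := he (y - x') (by omega) (by omega)
          rw [show x' + (y - x') = y by omega] at this
          rw [this, inb _ (by omega) (by omega)]; exact I.hb _
    have P1 : t ≤ m (u M') ∧ (∀ s, s < t → r m b (u M') s = r m b (u n) s) ∧ r m b (u M') t ∈ K := by
      refine ⟨by omega, ?_, ?_⟩
      · intro s hs
        unfold r
        rw [if_pos (by omega), if_pos (by omega), hh _ (by omega), hh _ (by omega)]
      · unfold r
        rw [if_pos (by omega), ← I.nz' M' x' hj0 (by omega)]; exact k1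
    rw [hy]
    apply I.lift IH K (show n ≤ N by omega) le_rfl hM'n (t := t) P1
    · rw [Nat.sub_self, add_zero]; exact P1
    · exact ⟨ht, fun _ _ => rfl, h4t⟩
    · exact ⟨ht, h4t⟩
    · intro s h1 h2; omega
    · intro s h1 h2; omega
    · omega
    · omega

end Img


/-- the segment of `f` of length `n` starting at `i` -/
def seg (f : ℕ → A) (i n : ℕ) : List A := (List.range n).map fun t => f (i+t)

@[simp] lemma seg_length (f : ℕ → A) (i n : ℕ) : (seg f i n).length = n := by simp [seg]

lemma seg_zero (f : ℕ → A) (i : ℕ) : seg f i 0 = [] := rfl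

lemma seg_get (f : ℕ → A) (i n t : ℕ) (h : t < (seg f i n).length) : (seg f i n)[t] = f (i+t) := by
  simp [seg]

lemma seg_add (f : ℕ → A) (i a b : ℕ) : seg f i (a+b) = seg f i a ++ seg f (i+a) b := by
  simp only [seg, List.range_add, List.map_append, List.map_map]
  congr 1
  apply List.map_congr_left
  intro t _
  simp [add_assoc]

lemma occ_iff (w : List A) (f : ℕ → A) (j : ℕ) : OccursAt w f j ↔ w = seg f j w.length := Iff.rfl

lemma seg_ext {f g : ℕ → A} {i j n : ℕ} : seg f i n = seg g j n ↔ ∀ t, t < n → f (i+t) = g (j+t) := by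
  constructor
  · intro h t ht
    have h1 : (seg f i n)[t]? = (seg g j n)[t]? := by rw [h]
    simpa [seg, ht] using h1
  · intro h
    apply List.map_congr_left
    intro t ht
    exact h t (List.mem_range.1 ht)

lemma infix_seg {f : ℕ → A} {j n : ℕ} {p : List A} :
    p <:+: seg f j n ↔ ∃ i, j ≤ i ∧ i + p.length ≤ j + n ∧ p = seg f i p.length := by
  constructor
  · rintro ⟨s, t, h⟩
    have hl := congrArg List.length h
    simp at hl
    have hn : n = s.length + (p.length + t.length) := by omega
    rw [hn, seg_add, seg_add, List.append_assoc] at h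
    have h1 := List.append_inj h (by simp)
    have h2 := List.append_inj h1.2 (by simp)
    exact ⟨j + s.length, by omega, by omega, h2.1⟩
  · rintro ⟨i, h1, h2, h3⟩
    refine ⟨seg f j (i-j), seg f (i+p.length) (j+n-(i+p.length)), ?_⟩
    have : n = (i - j) + (p.length + (j+n-(i+p.length))) := by omega
    conv_rhs => rw [this, seg_add, seg_add]
    rw [show j + (i-j) = i by omega, ← h3, List.append_assoc]

lemma seg_pal {f : ℕ → A} {i n : ℕ} :
    (seg f i n).reverse = seg f i n ↔ ∀ t, t < n → f (i+t) = f (i+(n-1-t)) := by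
  constructor
  · intro h t ht
    have h1 : (seg f i n).reverse[t]? = (seg f i n)[t]? := by rw [h]
    rw [List.getElem?_reverse (by simpa using ht)] at h1
    rw [seg_length] at h1
    simpa [seg, ht, show n - 1 - t < n by omega] using h1.symm
  · intro h
    apply List.ext_getElem
    · simp
    · intro t h1 h2
      rw [List.getElem_reverse, seg_get, seg_get, seg_length]
      rw [seg_length] at h2
      exact (h t h2).symm

def palSet (w : List A) : Set (List A) := {p | p <:+: w ∧ p.reverse = p}

lemma palCount_eq (w : List A) : palCount w = (palSet w).ncard := rfl

def R3 (f : ℕ → A) : Prop := ∀ i j l, i < j → (∀ s, s < l → f (i+s) = f (j+s)) →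
  (∀ s, s < l → f (j+s) = f (j+(l-1-s))) →
  ∃ a, i ≤ a ∧ a < j ∧ ∀ s, s < j + l - a → f (a+s) = f (a + (j+l-a-1-s))

lemma rich_step {f : ℕ → A} (h : R3 f) (j n : ℕ) :
    ∃ P, P ∉ palSet (seg f j n) ∧ palSet (seg f j (n+1)) = insert P (palSet (seg f j n)) := by
  classical
  have hex : ∃ a, j ≤ a ∧ a ≤ j + n ∧ ∀ s, s < j+n+1-a → f (a+s) = f (a+(j+n+1-a-1-s)) :=
    ⟨j+n, by omega, by omega, by intro s hs; congr 1; omega⟩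
  obtain ⟨a, ⟨ha1, ha2, ha3⟩, hmin⟩ : ∃ a, (j ≤ a ∧ a ≤ j + n ∧ ∀ s, s < j+n+1-a → f (a+s) = f (a+(j+n+1-a-1-s))) ∧
      ∀ a' < a, ¬ (j ≤ a' ∧ a' ≤ j + n ∧ ∀ s, s < j+n+1-a' → f (a'+s) = f (a'+(j+n+1-a'-1-s))) :=
    ⟨Nat.find hex, Nat.find_spec hex, fun a' h' => Nat.find_min hex h'⟩
  refine ⟨seg f a (j+n+1-a), ?_, ?_⟩
  · rintro ⟨h1, h2⟩
    obtain ⟨i, hi1, hi2, hi3⟩ := infix_seg.1 h1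
    rw [seg_length] at hi2 hi3
    obtain ⟨a', q1, q2, q3⟩ := h i a (j+n+1-a) (by omega)
      (fun s hs => (seg_ext.1 hi3 s hs).symm) ha3
    refine hmin a' q2 ⟨by omega, by omega, ?_⟩
    rw [show a + (j+n+1-a) = j + n + 1 by omega] at q3
    exact q3
  · ext p
    constructor
    · rintro ⟨h1, h2⟩
      obtain ⟨i, hi1, hi2, hi3⟩ := infix_seg.1 h1
      by_cases hc : i + p.length ≤ j + n
      · right
        exact ⟨infix_seg.2 ⟨i, hi1, hc, hi3⟩, h2⟩
      · have hpi : ∀ s, s < p.length → f (i+s) = f (i + (p.length-1-s)) := by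
          rw [hi3] at h2
          exact seg_pal.1 h2
        have hl : p.length = j + n + 1 - i := by omega
        rcases lt_trichotomy i a with hia | hia | hia
        · exfalso
          refine hmin i hia ⟨hi1, by omega, ?_⟩
          rw [← hl]; exact hpi
        · left
          rw [hi3, hl, hia]
        · right
          refine ⟨infix_seg.2 ⟨a, ha1, by omega, ?_⟩, h2⟩
          rw [hi3]
          simp only [seg_length]
          rw [seg_ext]
          intro t ht
          rw [hpi t ht, ha3 t (by omega)]
          congr 1; omega
    · rintro (rfl | ⟨h1, h2⟩)
      · refine ⟨infix_seg.2 ⟨a, ha1, by simp; omega, by simp⟩, seg_pal.2 ha3⟩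
      · obtain ⟨i, hi1, hi2, hi3⟩ := infix_seg.1 h1
        exact ⟨infix_seg.2 ⟨i, hi1, by omega, hi3⟩, h2⟩

lemma rich_of_R3 {f : ℕ → A} (h : R3 f) : RichSeq f := by
  have key : ∀ j n, (palSet (seg f j n)).Finite ∧ (palSet (seg f j n)).ncard = n + 1 := by
    intro j n
    induction n with
    | zero =>
      have : palSet (seg f j 0) = {[]} := by
        ext p; simp [palSet, seg_zero]
        rintro rfl; rfl
      rw [this]; simp
    | succ n ih =>
      obtain ⟨P, h1, h2⟩ := rich_step h j n
      rw [h2]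
      refine ⟨ih.1.insert _, ?_⟩
      rw [Set.ncard_insert_of_notMem h1 ih.1, ih.2]
  rintro w ⟨j, hw⟩
  rw [occ_iff] at hw
  unfold RichWord
  rw [palCount_eq]
  conv_lhs => rw [hw]
  exact (key j w.length).2

lemma R3_of_RMb {f : ℕ → ℕ} (h : ∀ N, RMb f N) : R3 f := by
  intro i j l hij he hp
  rcases Nat.eq_zero_or_pos l with rfl | hl
  · exact ⟨j-1, by omega, by omega, by intro s hs; congr 1; omega⟩
  have hj := hp 0 hl
  obtain ⟨a, h1, h2, h3, h4⟩ := h (j+(l-1)) {f j} i j (l-1) hij le_rfl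
    (by simpa using he 0 hl)
    (by
      rw [Set.mem_singleton_iff, he _ (by omega)]
      rw [show l - 1 - 0 = l - 1 by omega] at hj
      simpa using hj.symm)
    (by simp)
    (by
      rw [Set.mem_singleton_iff]
      rw [show l - 1 - 0 = l - 1 by omega] at hj
      simpa using hj.symm)
    (by intro s _ h2; exact he s (by omega))
    (by intro s _ h2; rw [hp s (by omega)]; congr 1; omega)
  rw [Set.mem_singleton_iff] at h3
  refine ⟨a, h1, h2, ?_⟩
  have hends : f a = f (j+l-1) := by
    rw [h3]
    rw [show j + l - 1 = j + (l - 1 - 0) by omega]; simpa using hj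
  intro s hs
  rcases Nat.eq_zero_or_pos s with rfl | hs0
  · rw [show a + (j+l-a-1-0) = j + l - 1 by omega]; simpa using hends
  · rcases Nat.lt_or_ge (s+1) (j+l-a) with hs1 | hs1
    · rw [h4 (a+s) (by omega) (by omega)]; congr 1; omega
    · rw [show a + s = j + l - 1 by omega, show a + (j+l-a-1-s) = a by omega]
      exact hends.symm

lemma R3_congr {f : ℕ → ℕ} {B : Type*} {g : ℕ → B} (h : R3 f) (hfg : ∀ x y, g x = g y ↔ f x = f y) : R3 g := by
  intro i j l hij he hp
  simp only [hfg] at *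
  exact h i j l hij he hp

namespace Img
variable {m b u v ρ : ℕ → ℕ}

lemma agree (I : Img m b u v ρ) {j ℓ : ℕ} (h : ∀ t, t < ℓ → u (j+t) = u t) :
    ∀ t, t < ρ ℓ → v (ρ j + t) = v t := by
  have hρ : ∀ i, i ≤ ℓ → ρ (j+i) = ρ j + ρ i := by
    intro i
    induction i with
    | zero => simp [I.z]
    | succ i ih =>
      intro hi
      rw [← add_assoc, I.s, I.s, ih (by omega), h i (by omega)]; omega
  intro t ht
  obtain ⟨i, q, h1, h2⟩ := I.loc t
  have hi : i < ℓ := by rw [← I.lt_iff]; omega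
  have h3 := hρ i (by omega)
  rcases Nat.eq_zero_or_pos q with h0 | h0
  · rw [show ρ j + t = ρ (j+i) by omega, show t = ρ i by omega, I.v0, I.v0]
  · rw [show ρ j + t = ρ (j+i) + 1 + (q-1) by omega, show t = ρ i + 1 + (q-1) by omega,
      I.right _ _ (by rw [h i hi]; omega), I.right _ _ (by omega), h i hi]

end Img

def PRec (u : ℕ → A) : Prop := ∀ ℓ N, ∃ j, N ≤ j ∧ ∀ t, t < ℓ → u (j+t) = u t

lemma Img.prec_fix {m b u ρ : ℕ → ℕ} (I : Img m b u u ρ) : PRec u := by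
  intro ℓ
  have : ∀ ℓ N, ∃ j, N ≤ j ∧ ∀ t, t < ℓ + 1 → u (j+t) = u t := by
    intro ℓ
    induction ℓ with
    | zero =>
      intro N
      refine ⟨ρ N, I.mono.id_le N, ?_⟩
      intro t ht
      have h0 := I.v0 0
      rw [I.z] at h0
      rw [show t = 0 by omega, add_zero, I.v0, h0]
    | succ ℓ ih =>
      intro N
      obtain ⟨j, h1, h2⟩ := ih N
      refine ⟨ρ j, h1.trans (I.mono.id_le j), ?_⟩
      intro t ht
      have := I.le2 (ℓ+1)
      exact I.agree h2 t (by omega)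
  intro N
  obtain ⟨j, h1, h2⟩ := this ℓ N
  exact ⟨j, h1, fun t ht => h2 t (by omega)⟩

lemma Img.prec {m b u v ρ : ℕ → ℕ} (I : Img m b u v ρ) (h : PRec u) : PRec v := by
  intro ℓ N
  obtain ⟨j, h1, h2⟩ := h ℓ N
  refine ⟨ρ j, h1.trans (I.mono.id_le j), ?_⟩
  intro t ht
  have := I.le2 ℓ
  exact I.agree h2 t (by omega)

lemma PRec.recurrent {f : ℕ → A} (h : PRec f) : Recurrent f := by
  rintro w ⟨j, hw⟩ N
  obtain ⟨i, h1, h2⟩ := h (j + w.length) N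
  refine ⟨i + j, by omega, ?_⟩
  rw [occ_iff] at *
  rw [hw, seg_length, seg_ext]
  intro t ht
  rw [add_assoc, h2 _ (by omega)]

/-- prefixes of the fixed point -/
def Apre (m b : ℕ → ℕ) : ℕ → List ℕ
  | 0 => []
  | k+1 => Apre m b k ++ (0 :: List.replicate (m ((Apre m b k).getD k 0)) (b ((Apre m b k).getD k 0)))

def fixS (m b : ℕ → ℕ) (k : ℕ) : ℕ := (Apre m b k).getD k 0

def fixR (m b : ℕ → ℕ) (k : ℕ) : ℕ := (Apre m b k).length

lemma Apre_succ (m b : ℕ → ℕ) (k : ℕ) :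
    Apre m b (k+1) = Apre m b k ++ (0 :: List.replicate (m (fixS m b k)) (b (fixS m b k))) := rfl

lemma fixR_succ (m b : ℕ → ℕ) (k : ℕ) : fixR m b (k+1) = fixR m b k + 1 + m (fixS m b k) := by
  unfold fixR
  rw [Apre_succ]; simp; omega

lemma Apre_stable (m b : ℕ → ℕ) (j i e : ℕ) (h : i < fixR m b j) :
    (Apre m b (j+e)).getD i 0 = (Apre m b j).getD i 0 := by
  induction e with
  | zero => rfl
  | succ e ih =>
    rw [← add_assoc, Apre_succ, List.getD_append, ih]
    have : ∀ e, fixR m b j ≤ fixR m b (j+e) := by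
      intro e
      induction e with
      | zero => rfl
      | succ e ih => rw [← add_assoc, fixR_succ]; omega
    exact lt_of_lt_of_le h (this e)

lemma fixS_eq (m b : ℕ → ℕ) (hm : ∀ z, 1 ≤ m z) (i k : ℕ) (h : i < fixR m b k) :
    fixS m b i = (Apre m b k).getD i 0 := by
  have hl : ∀ k, 2 * k ≤ fixR m b k := by
    intro k
    induction k with
    | zero => simp
    | succ k ih => rw [fixR_succ]; have := hm (fixS m b k); omega
  rcases Nat.eq_zero_or_pos i with rfl | hi
  · have hk : k ≠ 0 := by
      rintro rfl; simp [fixR, Apre] at h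
    obtain ⟨e, rfl⟩ : ∃ e, k = 1 + e := ⟨k-1, by omega⟩
    rw [Apre_stable _ _ _ _ _ (by have := hl 1; omega)]
    simp [fixS, Apre]
  · rcases le_total i k with hik | hik
    · obtain ⟨e, rfl⟩ := Nat.exists_eq_add_of_le hik
      rw [Apre_stable _ _ _ _ _ (by have := hl i; omega)]
      rfl
    · obtain ⟨e, rfl⟩ := Nat.exists_eq_add_of_le hik
      unfold fixS
      rw [Apre_stable _ _ _ _ _ h]

lemma img_fix (m b : ℕ → ℕ) (hm : ∀ z, 1 ≤ m z) (hb : ∀ z, b z ≠ 0)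
    (inj : ∀ x y, m x = m y → b x = b y → x = y) : Img m b (fixS m b) (fixS m b) (fixR m b) where
  z := rfl
  s := fixR_succ m b
  v0 := by
    intro n
    rw [fixS_eq m b hm (fixR m b n) (n+1) (by rw [fixR_succ]; omega), Apre_succ]
    rw [List.getD_append_right _ _ _ _ (by unfold fixR; omega)]
    simp [fixR]
  vb := by
    intro n t ht
    rw [fixS_eq m b hm (fixR m b n + 1 + t) (n+1) (by rw [fixR_succ]; omega), Apre_succ]
    rw [List.getD_append_right _ _ _ _ (by unfold fixR; omega)]
    rw [show fixR m b n + 1 + t - (Apre m b n).length = t + 1 by unfold fixR; omega]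
    simp [ht]
  hm := hm
  hb := hb
  inj := fun _ _ => inj _ _

def betR (u : ℕ → ℕ) (n : ℕ) : ℕ := ∑ i ∈ Finset.range n, (u i + 2)

open Classical in
noncomputable def betS (u : ℕ → ℕ) (x : ℕ) : ℕ := if ∃ n, betR u n = x then 0 else 1

lemma img_bet (u : ℕ → ℕ) : Img (fun z => z+1) (fun _ => 1) u (betS u) (betR u) where
  z := rfl
  s := by intro n; simp only [betR, Finset.sum_range_succ]; omega
  v0 := by intro n; simp [betS]
  vb := by
    intro n t ht
    unfold betS
    rw [if_neg]
    rintro ⟨k, hk⟩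
    have hs : ∀ n, betR u (n+1) = betR u n + (u n + 2) := by
      intro n; simp only [betR, Finset.sum_range_succ]
    have mono : StrictMono (betR u) := strictMono_nat_of_lt_succ (by intro n; rw [hs]; omega)
    have h1 : n < k := by rw [← mono.lt_iff_lt]; omega
    have h2 : k < n + 1 := by rw [← mono.lt_iff_lt, hs]; have h3 : t < u n + 1 := ht; omega
    omega
  hm := by intro z; simp
  hb := by intro z; simp
  inj := by intro i j h _; simpa using h

/-- the number of nonzero letters in the image of a letter under the inner morphism -/
def pm (H : ℕ) (z : ℕ) : ℕ := if z < H then 1 else 2 + (z - H)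
/-- the nonzero letter in the image of a letter under the inner morphism -/
def pb (H : ℕ) (z : ℕ) : ℕ := min (z+1) H

def uS (H : ℕ) : ℕ → ℕ := fixS (pm H) (pb H)
def uR (H : ℕ) : ℕ → ℕ := fixR (pm H) (pb H)

lemma img_u (H : ℕ) (hH : 1 ≤ H) : Img (pm H) (pb H) (uS H) (uS H) (uR H) := by
  apply img_fix
  · intro z; unfold pm; split_ifs <;> omega
  · intro z; unfold pb; omega
  · intro x y; unfold pm pb; split_ifs <;> omega

lemma uS_le (H : ℕ) (hH : 1 ≤ H) (x : ℕ) : uS H x ≤ H := by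
  have I := img_u H hH
  obtain ⟨n, t, h1, h2⟩ := I.loc x
  rcases Nat.eq_zero_or_pos t with h0 | h0
  · rw [show x = uR H n by omega, I.v0]; omega
  · rw [show x = uR H n + 1 + (t-1) by omega, I.vb _ _ (by omega)]
    unfold pb; omega

lemma RMb_u (H : ℕ) (hH : 1 ≤ H) (N : ℕ) : RMb (uS H) N := by
  induction N with
  | zero =>
    intro K x' x k h1 h2
    omega
  | succ N ih =>
    apply (img_u H hH).img_RM (h := H) _ ih
    intro z; unfold pm pb; split_ifs <;> omega

lemma RMb_v (H : ℕ) (hH : 1 ≤ H) (N : ℕ) : RMb (betS (uS H)) N := by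
  rcases N with _ | N
  · intro K x' x k h1 h2
    omega
  · exact (img_bet (uS H)).img_RM (h := 1) (by intros; rfl) (RMb_u H hH N)

/-- the final sequence over `Fin d` -/
noncomputable def finS (d : ℕ) (hd : 2 ≤ d) (H : ℕ) (x : ℕ) : Fin d :=
  if betS (uS H) x = 0 then ⟨0, by omega⟩ else ⟨1, by omega⟩

lemma betS_01 (u : ℕ → ℕ) (x : ℕ) : betS u x = 0 ∨ betS u x = 1 := by
  unfold betS; split_ifs <;> simp

lemma finS_iff (d : ℕ) (hd : 2 ≤ d) (H : ℕ) (x y : ℕ) :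
    finS d hd H x = finS d hd H y ↔ betS (uS H) x = betS (uS H) y := by
  unfold finS
  rcases betS_01 (uS H) x with h | h <;> rcases betS_01 (uS H) y with h' | h' <;> simp [h, h']

lemma finS_rich (d : ℕ) (hd : 2 ≤ d) (H : ℕ) (hH : 1 ≤ H) : RichSeq (finS d hd H) :=
  rich_of_R3 (R3_congr (R3_of_RMb (RMb_v H hH)) (finS_iff d hd H))

lemma finS_rec (d : ℕ) (hd : 2 ≤ d) (H : ℕ) (hH : 1 ≤ H) : Recurrent (finS d hd H) := by
  apply PRec.recurrent
  intro ℓ N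
  obtain ⟨j, h1, h2⟩ := (img_bet (uS H)).prec (img_u H hH).prec_fix ℓ N
  exact ⟨j, h1, fun t ht => (finS_iff d hd H _ _).2 (h2 t ht)⟩



/-- iterated lengths -/
def Lw (H : ℕ) : ℕ → ℕ → ℤ
  | 0, z => (z : ℤ) + 2
  | n+1, z => Lw H n 0 + if z < H then Lw H n (z+1) else 2 * Lw H n H

/-- lengths of the common extensions -/
def Ew (H : ℕ) : ℕ → ℕ → ℤ
  | 0, _ => 0
  | n+1, a => if a + 1 = H then Lw H n H + Ew H n 0 else Ew H n (a+1)

def Sw (H : ℕ) : ℕ → ℤ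
  | 0 => 0
  | n+1 => Sw H n + Lw H n 0

lemma Lw_succ (H n z : ℕ) : Lw H (n+1) z = Lw H n 0 + if z < H then Lw H n (z+1) else 2 * Lw H n H := rfl
lemma Ew_succ (H n a : ℕ) : Ew H (n+1) a = if a + 1 = H then Lw H n H + Ew H n 0 else Ew H n (a+1) := rfl

lemma Lw_pos (H n z : ℕ) : 0 < Lw H n z := by
  induction n generalizing z with
  | zero => simp only [Lw]; omega
  | succ n ih =>
    rw [Lw_succ]
    have h1 := ih 0
    have h2 := ih (z+1)
    have h3 := ih H
    split_ifs <;> linarith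

lemma Lw_mono1 (H n z : ℕ) (hz : z < H) : Lw H n z ≤ Lw H n (z+1) := by
  induction n generalizing z with
  | zero => simp only [Lw]; push_cast; omega
  | succ n ih =>
    rw [Lw_succ, Lw_succ, if_pos hz]
    split_ifs with h
    · have := ih (z+1) h; linarith
    · have : z + 1 = H := by omega
      rw [this]
      have := Lw_pos H n H
      linarith

lemma Lw_mono (H n a b : ℕ) (hab : a ≤ b) (hb : b ≤ H) : Lw H n a ≤ Lw H n b := by
  induction b, hab using Nat.le_induction with
  | base => exact le_rfl
  | succ b hab ih => exact (ih (by omega)).trans (Lw_mono1 H n b (by omega))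

lemma Ew_nonneg (H n a : ℕ) : 0 ≤ Ew H n a := by
  induction n generalizing a with
  | zero => simp [Ew]
  | succ n ih =>
    rw [Ew_succ]
    have := Lw_pos H n H
    have h1 := ih 0
    have h2 := ih (a+1)
    split_ifs <;> linarith

lemma Ew_le (H n a : ℕ) (ha : a < H) : Ew H n a ≤ Lw H n a := by
  induction n generalizing a with
  | zero => simp only [Ew]; exact (Lw_pos H 0 a).le
  | succ n ih =>
    rw [Ew_succ, Lw_succ, if_pos ha]
    split_ifs with h
    · rw [h]; have := ih 0 (by omega); linarith
    · have := ih (a+1) (by omega); have := Lw_pos H n 0; linarith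

lemma delta1 (H n a : ℕ) (h : n + a < H) : Lw H n (a+1) = Lw H n a + 1 := by
  induction n generalizing a with
  | zero => simp only [Lw]; push_cast; ring
  | succ n ih =>
    rw [Lw_succ, Lw_succ, if_pos (by omega), if_pos (by omega), ih (a+1) (by omega)]; ring

lemma deltaX (H n k : ℕ) (h : k < H) :
    Lw H (n+1+k) (H-1-k+1) = Lw H (n+1+k) (H-1-k) + Lw H n H := by
  induction k with
  | zero =>
    rw [add_zero, Lw_succ, Lw_succ, if_neg (by omega), if_pos (by omega)]
    rw [show H - 1 - 0 + 1 = H by omega]; ring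
  | succ k ih =>
    have := ih (by omega)
    rw [← add_assoc, Lw_succ, Lw_succ, if_pos (by omega), if_pos (by omega)]
    rw [show H - 1 - (k+1) + 1 = H - 1 - k by omega, this]; ring

lemma Ew_X (H n k : ℕ) (h : k < H) : Ew H (n+1+k) (H-1-k) = Lw H n H + Ew H n 0 := by
  induction k with
  | zero => rw [add_zero, Ew_succ, if_pos (by omega)]
  | succ k ih =>
    rw [← add_assoc, Ew_succ, if_neg (by omega), show H - 1 - (k+1) + 1 = H - 1 - k by omega]
    exact ih (by omega)

lemma Ew_zero (H n a : ℕ) (h : n + a < H) : Ew H n a = 0 := by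
  induction n generalizing a with
  | zero => rfl
  | succ n ih => rw [Ew_succ, if_neg (by omega)]; exact ih _ (by omega)

lemma Ew_rec (H n : ℕ) (hH : 1 ≤ H) : Ew H (n+H) 0 = Lw H n H + Ew H n 0 := by
  have := Ew_X H n (H-1) (by omega)
  rwa [show n + 1 + (H-1) = n + H by omega, show H - 1 - (H-1) = 0 by omega] at this

lemma X_rec (H n : ℕ) : Lw H (n+1) H = 2 * Lw H n H + Lw H n 0 := by
  rw [Lw_succ, if_neg (by omega)]; ring

lemma Y_rec1 (H n : ℕ) (h : n < H) : Lw H (n+1) 0 = 2 * Lw H n 0 + 1 := by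
  rw [Lw_succ, if_pos (by omega), delta1 H n 0 (by omega)]; ring

lemma Y_rec2 (H n : ℕ) (hH : 1 ≤ H) : Lw H (n+H+1) 0 = 2 * Lw H (n+H) 0 + Lw H n H := by
  have := deltaX H n (H-1) (by omega)
  rw [show n + 1 + (H-1) = n + H by omega, show H - 1 - (H-1) = 0 by omega] at this
  rw [Lw_succ, if_pos (by omega), this]; ring

lemma Y_double (H n : ℕ) (hH : 1 ≤ H) : 2 * Lw H n 0 ≤ Lw H (n+1) 0 := by
  rw [Lw_succ, if_pos (by omega)]
  have := Lw_mono1 H n 0 (by omega)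
  linarith

lemma Sw_le (H n : ℕ) (hH : 1 ≤ H) : Sw H n ≤ Lw H n 0 := by
  induction n with
  | zero => simp [Sw, Lw]
  | succ n ih =>
    have := Y_double H n hH
    simp only [Sw]; linarith

lemma Sw_nonneg (H n : ℕ) : 0 ≤ Sw H n := by
  induction n with
  | zero => simp [Sw]
  | succ n ih => simp only [Sw]; have := Lw_pos H n 0; linarith

lemma X_pow2 (H n k : ℕ) : 2 ^ k * Lw H n H ≤ Lw H (n+k) H := by
  induction k with
  | zero => simp
  | succ k ih =>
    rw [← add_assoc, X_rec, pow_succ]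
    have := Lw_pos H (n+k) 0
    linarith

lemma X_pow3 (H n k : ℕ) : Lw H (n+k) H ≤ 3 ^ k * Lw H n H := by
  induction k with
  | zero => simp
  | succ k ih =>
    rw [← add_assoc, X_rec, pow_succ]
    have := Lw_mono H (n+k) 0 H (by omega) le_rfl
    linarith

lemma X_lin (q n : ℕ) (hq : 1 ≤ q) : 2 * Lw (2*q) n (2*q) ≤ (2*q+2+n) * Lw (2*q) n 0 := by
  induction n with
  | zero => simp only [Lw]; push_cast; linarith
  | succ n ih =>
    rw [X_rec]
    have h1 := Y_double (2*q) n (by omega)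
    have h2 : (2*q+2+(n+1) : ℤ) * (2 * Lw (2*q) n 0) ≤ (2*q+2+(n+1) : ℤ) * Lw (2*q) (n+1) 0 :=
      mul_le_mul_of_nonneg_left h1 (by positivity)
    push_cast
    linarith

lemma three_pow_ge (q : ℕ) : (2*q+1 : ℤ) ≤ 3^q := by
  induction q with
  | zero => simp
  | succ q ih => rw [pow_succ]; push_cast; linarith

lemma X_le (q n : ℕ) (hq : 1 ≤ q) : Lw (2*q) n (2*q) ≤ 3^q * Lw (2*q) n 0 := by
  have small : ∀ n, n ≤ 2*q → Lw (2*q) n (2*q) ≤ 3^q * Lw (2*q) n 0 := by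
    intro n hn
    have h1 := X_lin q n hq
    have h2 := three_pow_ge q
    have h3 := Lw_pos (2*q) n 0
    have hn' : (n:ℤ) ≤ 2*q := by exact_mod_cast hn
    have h4 : ((2*q+2+n : ℤ)) * Lw (2*q) n 0 ≤ (2 * 3^q) * Lw (2*q) n 0 :=
      mul_le_mul_of_nonneg_right (by linarith) h3.le
    linarith
  rcases le_total n (2*q) with h | h
  · exact small n h
  · obtain ⟨k, rfl⟩ := Nat.exists_eq_add_of_le' h
    clear h
    induction k with
    | zero => exact small _ (by omega)
    | succ k ih =>
      have h1 := X_pow3 (2*q) k (2*q)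
      have e1 : (3:ℤ)^(2*q) = 3^q * 3^q := by rw [two_mul, pow_add]
      rw [e1] at h1
      have hT : (1:ℤ) ≤ 3^q := one_le_pow₀ (by norm_num)
      rw [show k + 1 + 2*q = k + 2*q + 1 by omega, X_rec, Y_rec2 _ _ (by omega)]
      generalize (3:ℤ)^q = T at *
      generalize Lw (2*q) (k+2*q) (2*q) = X at *
      generalize Lw (2*q) (k+2*q) 0 = Y at *
      generalize Lw (2*q) k (2*q) = X' at *
      have h2 : 0 ≤ (T*Y - X)*(2*T-1) := mul_nonneg (by linarith) (by linarith)
      have h3 : T * (2*X+Y) ≤ T * (T * (2*Y+X')) := by nlinarith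
      exact le_of_mul_le_mul_left h3 (by linarith)

lemma Y_le (H n : ℕ) (h : n ≤ H) : Lw H n 0 + 1 = 3 * 2^n := by
  induction n with
  | zero => simp [Lw]
  | succ n ih =>
    have := ih (by omega)
    rw [Y_rec1 H n (by omega), pow_succ]; linarith

lemma X_ge (q n : ℕ) (hq : 1 ≤ q) (hc : (2*q+2 : ℤ) * 3^q ≤ 3 * 4^q) :
    (2*q+2) * Lw (2*q) n 0 ≤ 3 * Lw (2*q) n (2*q) := by
  have small : ∀ n, n ≤ 2*q → (2*q+2) * Lw (2*q) n 0 ≤ 3 * Lw (2*q) n (2*q) := by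
    intro n hn
    have h1 := Y_le (2*q) n hn
    have h2 := X_pow2 (2*q) 0 n
    rw [zero_add] at h2
    have h3 : Lw (2*q) 0 (2*q) = 2*q+2 := by simp [Lw]
    rw [h3] at h2
    have : Lw (2*q) n 0 ≤ 3 * 2^n := by linarith
    have := mul_le_mul_of_nonneg_left this (show (0:ℤ) ≤ 2*q+2 by positivity)
    linarith
  rcases le_total n (2*q) with h | h
  · exact small n h
  · obtain ⟨k, rfl⟩ := Nat.exists_eq_add_of_le' h
    clear h
    induction k with
    | zero => exact small _ (by omega)
    | succ k ih =>
      have h1 := X_pow2 (2*q) k (2*q)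
      have e1 : (2:ℤ)^(2*q) = 4^q := by rw [pow_mul]; norm_num
      rw [e1] at h1
      have h5 := X_le q (k+2*q) hq
      have hF : (1:ℤ) ≤ 4^q := one_le_pow₀ (by norm_num)
      have hY := Lw_pos (2*q) (k+2*q) 0
      rw [show k + 1 + 2*q = k + 2*q + 1 by omega, X_rec, Y_rec2 _ _ (by omega)]
      have hCp : (0:ℤ) ≤ 2*q+2 := by positivity
      generalize (3:ℤ)^q = T at *
      generalize (4:ℤ)^q = F at *
      generalize Lw (2*q) (k+2*q) (2*q) = X at *
      generalize Lw (2*q) (k+2*q) 0 = Y at *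
      generalize Lw (2*q) k (2*q) = X' at *
      generalize (2*q+2:ℤ) = C at *
      have a1 : C * (F * X') ≤ C * (T * Y) := mul_le_mul_of_nonneg_left (h1.trans h5) hCp
      have a2 : C * T * Y ≤ 3 * F * Y := mul_le_mul_of_nonneg_right hc hY.le
      have a3 : F * (C * X') ≤ F * (3 * Y) := by linarith
      have a4 := le_of_mul_le_mul_left a3 (by linarith)
      linarith

lemma E_le (q n : ℕ) (hq : 1 ≤ q) : 4^q * Ew (2*q) n 0 ≤ 2 * Lw (2*q) n (2*q) := by
  induction n using Nat.strong_induction_on with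
  | _ n ih =>
    rcases Nat.lt_or_ge n (2*q) with h | h
    · rw [Ew_zero _ _ _ (by omega)]
      have := Lw_pos (2*q) n (2*q)
      linarith
    · obtain ⟨k, rfl⟩ := Nat.exists_eq_add_of_le' h
      rw [Ew_rec _ _ (by omega)]
      have h1 := X_pow2 (2*q) k (2*q)
      have e1 : (2:ℤ)^(2*q) = 4^q := by rw [pow_mul]; norm_num
      have h2 := ih k (by omega)
      have hF : (4:ℤ)^1 ≤ 4^q := pow_le_pow_right₀ (by norm_num) hq
      rw [e1] at h1
      have hp := Lw_pos (2*q) k (2*q)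
      nlinarith

/-- the numeric package -/
structure Num (H : ℕ) (N : ℤ) : Prop where
  hH : 1 ≤ H
  hN : 1 ≤ N
  f4 : ∀ n, N * (Sw H n + 2 * Ew H n 0) ≤ (N+1) * Lw H n 0
  f5 : ∀ n, N * (Sw H n + 2 * Ew H n 0) ≤ Lw H n H

lemma num_of (q : ℕ) (N : ℤ) (hq : 1 ≤ q) (hN : 1 ≤ N) (h1 : 4 * N * 3^q ≤ 4^q)
    (hc : (2*q+2 : ℤ) * 3^q ≤ 3 * 4^q) (h3 : 3 * (N+1) ≤ 2*q+2) : Num (2*q) N := by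
  have f4 : ∀ n, N * (Sw (2*q) n + 2 * Ew (2*q) n 0) ≤ (N+1) * Lw (2*q) n 0 := by
    intro n
    have a1 := Sw_le (2*q) n (by omega)
    have a2 := E_le q n hq
    have a3 := X_le q n hq
    have hY := Lw_pos (2*q) n 0
    have hF : (1:ℤ) ≤ 4^q := one_le_pow₀ (by norm_num)
    generalize (3:ℤ)^q = T at *
    generalize (4:ℤ)^q = F at *
    generalize Lw (2*q) n (2*q) = X at *
    generalize Lw (2*q) n 0 = Y at *
    generalize Ew (2*q) n 0 = E at *
    generalize Sw (2*q) n = S at *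
    have b1 : F * E ≤ 2 * (T * Y) := by linarith
    have b2 : 2 * N * (F * E) ≤ 2 * N * (2 * (T*Y)) := mul_le_mul_of_nonneg_left b1 (by linarith)
    have b3 : 4 * N * T * Y ≤ F * Y := mul_le_mul_of_nonneg_right h1 hY.le
    have b4 : F * (2 * N * E) ≤ F * Y := by linarith
    have b5 := le_of_mul_le_mul_left b4 (by linarith)
    have b6 : N * S ≤ N * Y := mul_le_mul_of_nonneg_left a1 (by linarith)
    linarith
  refine ⟨by omega, hN, f4, ?_⟩
  intro n
  have a1 := X_ge q n hq hc
  have hY := Lw_pos (2*q) n 0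
  have a2 := f4 n
  have a3 : 3 * (N+1) * Lw (2*q) n 0 ≤ (2*q+2) * Lw (2*q) n 0 := mul_le_mul_of_nonneg_right h3 hY.le
  linarith

lemma exists_num (N : ℕ) (hN : 1 ≤ N) : ∃ q : ℕ, Num (2*q) (N:ℤ) := by
  have t1 := tendsto_pow_const_mul_const_pow_of_abs_lt_one 0 (show |(3/4:ℝ)| < 1 by rw [abs_lt]; norm_num)
  have t2 := tendsto_pow_const_mul_const_pow_of_abs_lt_one 1 (show |(3/4:ℝ)| < 1 by rw [abs_lt]; norm_num)
  have hpos : (0:ℝ) < 1 / (4*N) := by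
    have : (0:ℝ) < N := by exact_mod_cast hN
    positivity
  have e1 := t1.eventually (gt_mem_nhds hpos)
  have e2 := t2.eventually (gt_mem_nhds (show (0:ℝ) < 1/4 by norm_num))
  obtain ⟨q, ⟨h1, h2⟩, h3⟩ := ((e1.and e2).and (Filter.eventually_ge_atTop (2*N+1))).exists
  have hN' : (1:ℝ) ≤ N := by exact_mod_cast hN
  have hp : (0:ℝ) < 4^q := by positivity
  have hq1 : 1 ≤ q := by omega
  have hq1' : (1:ℝ) ≤ q := by exact_mod_cast hq1
  rw [div_pow] at h1 h2
  refine ⟨q, num_of q N hq1 (by exact_mod_cast hN) ?_ ?_ ?_⟩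
  · have : (4 * N * 3^q : ℝ) ≤ 4^q := by
      rw [pow_zero, one_mul, div_lt_div_iff₀ hp (by positivity)] at h1
      linarith
    exact_mod_cast this
  · have : ((2*q+2) * 3^q : ℝ) ≤ 3 * 4^q := by
      rw [pow_one, ← mul_div_assoc, div_lt_div_iff₀ hp (by positivity)] at h2
      have : (0:ℝ) < 3^q := by positivity
      nlinarith
    exact_mod_cast this
  · push_cast
    have : 2*(N:ℤ)+1 ≤ q := by exact_mod_cast h3
    linarith



namespace Img
variable {m b u v ρ : ℕ → ℕ}

lemma le2' (I : Img m b u v ρ) (a c : ℕ) : ρ a + 2 * c ≤ ρ (a+c) := by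
  induction c with
  | zero => simp
  | succ c ih => rw [← add_assoc, I.s]; have := I.hm (u (a+c)); omega

lemma blocks (I : Img m b u v ρ) {s e p : ℕ} (hp : 1 ≤ p)
    (heq : ∀ x, s ≤ x → x < e → v x = v (x+p)) (hz : ∃ x, s ≤ x ∧ x < e ∧ v x = 0) :
    ∃ c j p', 1 ≤ p' ∧ p' < p ∧ s ≤ ρ c ∧ ρ (c+j) < e ∧ e ≤ ρ (c+j+1) ∧ (c = 0 ∨ ρ (c-1) < s) ∧
      (∀ i, i ≤ j → ρ (c+i+p') = ρ (c+i) + p) ∧ (∀ i, i < j → u (c+i) = u (c+i+p')) := by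
  classical
  have hex : ∃ c, s ≤ ρ c := ⟨s, I.mono.id_le s⟩
  obtain ⟨c, hc1, hc2⟩ : ∃ c, s ≤ ρ c ∧ ∀ c' < c, ¬ s ≤ ρ c' :=
    ⟨Nat.find hex, Nat.find_spec hex, fun _ h => Nat.find_min hex h⟩
  obtain ⟨x, hx1, hx2, hx3⟩ := hz
  obtain ⟨k, rfl⟩ := I.zero hx3
  have hck : c ≤ k := by
    by_contra h
    exact hc2 k (by omega) hx1
  obtain ⟨c3, t, h1, h2⟩ := I.loc (e-1)
  have hs3 := I.s c3
  have hkc : k ≤ c3 := by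
    have : k < c3 + 1 := by rw [← I.lt_iff]; omega
    omega
  obtain ⟨j, rfl⟩ := Nat.exists_eq_add_of_le (hck.trans hkc)
  have hce : ρ c < e := lt_of_le_of_lt (I.le_iff.2 hck) hx2
  have hz2 := heq (ρ c) hc1 hce
  rw [I.v0] at hz2
  obtain ⟨c2, hc2'⟩ := I.zero hz2.symm
  have hcc2 : c < c2 := by rw [← I.lt_iff]; omega
  obtain ⟨p', rfl⟩ := Nat.exists_eq_add_of_le hcc2.le
  have key : ∀ i, i < j → ρ (c+i+p') = ρ (c+i) + p → u (c+i) = u (c+i+p') := by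
    intro i hi h
    apply I.decode
    intro q hq
    have g1 := I.s (c+i)
    have g2 : ρ (c+i+1) ≤ ρ (c+j) := I.le_iff.2 (by omega)
    have g3 : ρ c ≤ ρ (c+i) := I.le_iff.2 (by omega)
    rw [heq _ (by omega) (by omega)]
    congr 1; omega
  have key2 : ∀ i, i ≤ j → ρ (c+i+p') = ρ (c+i) + p := by
    intro i
    induction i with
    | zero => intro _; simp only [add_zero]; omega
    | succ i ih =>
      intro hi
      have h3 := ih (by omega)
      have h4 := key i (by omega) h3
      rw [show c + (i+1) + p' = c + i + p' + 1 by omega, show c + (i+1) = c + i + 1 by omega,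
        I.s, I.s, ← h4]
      omega
  have := I.le2' c p'
  refine ⟨c, j, p', by omega, by omega, hc1, by omega, by omega, ?_, key2, fun i hi => key i hi (key2 i (by omega))⟩
  rcases Nat.eq_zero_or_pos c with h | h
  · exact Or.inl h
  · right
    have := hc2 (c-1) (by omega)
    omega

end Img

/-- weighted prefix sums -/
def PSw (H n : ℕ) : ℕ → ℤ
  | 0 => 0
  | x+1 => PSw H n x + Lw H n (uS H x)

lemma PSw_succ (H n x : ℕ) : PSw H n (x+1) = PSw H n x + Lw H n (uS H x) := rfl

lemma PSw_mono (H n x y : ℕ) (h : x ≤ y) : PSw H n x ≤ PSw H n y := by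
  induction y, h using Nat.le_induction with
  | base => exact le_rfl
  | succ y _ ih => rw [PSw_succ]; have := Lw_pos H n (uS H y); linarith

lemma PSw_shift (H n a c p : ℕ) (hac : a ≤ c) (h : ∀ x, a ≤ x → x < c → uS H x = uS H (x+p)) :
    PSw H n (c+p) - PSw H n c = PSw H n (a+p) - PSw H n a := by
  induction c, hac using Nat.le_induction with
  | base => rfl
  | succ c hac ih =>
    have := ih (fun x h1 h2 => h x h1 (by omega))
    rw [show c + 1 + p = c + p + 1 by omega, PSw_succ, PSw_succ, ← h c hac (by omega)]
    linarith

lemma PSw_blk (H n k t : ℕ) (hH : 1 ≤ H) (ht : t ≤ pm H (uS H k)) :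
    PSw H n (uR H k + 1 + t) = PSw H n (uR H k) + Lw H n 0 + t * Lw H n (pb H (uS H k)) := by
  have I := img_u H hH
  induction t with
  | zero => rw [add_zero, PSw_succ, I.v0]; simp
  | succ t ih =>
    rw [← add_assoc, PSw_succ, ih (by omega), I.vb k t (by omega)]
    push_cast; ring

lemma Lw_pm (H n z : ℕ) (hz : z ≤ H) : Lw H (n+1) z = Lw H n 0 + pm H z * Lw H n (pb H z) := by
  rw [Lw_succ]
  unfold pm pb
  split_ifs with h
  · rw [Nat.min_eq_left (by omega)]; push_cast; ring
  · rw [Nat.min_eq_right (by omega), show z - H = 0 by omega]; push_cast; ring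

lemma PSw_img (H n k : ℕ) (hH : 1 ≤ H) : PSw H n (uR H k) = PSw H (n+1) k := by
  have I := img_u H hH
  induction k with
  | zero => rw [I.z]; rfl
  | succ k ih =>
    rw [I.s, PSw_blk H n k _ hH le_rfl, ih, PSw_succ, Lw_pm H n _ (uS_le H hH k)]; ring

def Dw (H n a b : ℕ) : ℤ := if a = b then 0 else Ew H n (min a b)

lemma Dw_nonneg (H n a b : ℕ) : 0 ≤ Dw H n a b := by
  unfold Dw; split_ifs
  · rfl
  · exact Ew_nonneg _ _ _

lemma Dw_self (H n a : ℕ) : Dw H n a a = 0 := by simp [Dw]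

lemma Dw_le0 (H n a b : ℕ) (h : a = 0 ∨ b = 0 ∨ a = b) : Dw H n a b ≤ Ew H n 0 := by
  have := Ew_nonneg H n 0
  unfold Dw
  split_ifs with h1
  · exact this
  · rw [show min a b = 0 by omega]

lemma Dw_leL (H n a b : ℕ) (ha : a ≤ H) (hb : b ≤ H) : Dw H n a b ≤ Lw H n a := by
  unfold Dw
  split_ifs with h1
  · exact (Lw_pos H n a).le
  · exact (Ew_le H n _ (by omega)).trans (Lw_mono H n _ _ (by omega) ha)

lemma Dw_leR (H n a b : ℕ) (ha : a ≤ H) (hb : b ≤ H) : Dw H n a b ≤ Lw H n b := by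
  unfold Dw
  split_ifs with h1
  · exact (Lw_pos H n b).le
  · exact (Ew_le H n _ (by omega)).trans (Lw_mono H n _ _ (by omega) hb)

lemma Dw_tail (H n z z2 τ : ℕ) (hH : 1 ≤ H) (hz : z ≤ H) (hz2 : z2 ≤ H) (hne : z ≠ z2)
    (h1 : τ ≤ pm H z) (h2 : τ ≤ pm H z2) (h3 : 1 ≤ τ → pb H z = pb H z2) :
    τ * Lw H n (pb H z) + Dw H n (Img.r (pm H) (pb H) z τ) (Img.r (pm H) (pb H) z2 τ)
      ≤ Dw H (n+1) z z2 := by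
  rcases Nat.eq_zero_or_pos τ with h0 | h0
  · subst h0
    have p1 : 0 < pm H z := by unfold pm; split_ifs <;> omega
    have p2 : 0 < pm H z2 := by unfold pm; split_ifs <;> omega
    unfold Img.r
    rw [if_pos p1, if_pos p2]
    by_cases hm : min z z2 + 1 = H
    · have : pb H z = pb H z2 := by unfold pb; omega
      rw [this, Dw_self]
      have := Dw_nonneg H (n+1) z z2
      simpa using this
    · unfold Dw
      rw [if_neg hne, if_neg (by unfold pb; omega), Ew_succ, if_neg hm,
        show min (pb H z) (pb H z2) = min z z2 + 1 by unfold pb; omega]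
      simp
  · have h4 := h3 h0
    have hm : min z z2 + 1 = H := by unfold pb at h4; omega
    have hτ : τ = 1 := by
      unfold pm at h1 h2
      split_ifs at h1 h2 <;> omega
    subst hτ
    have hb : pb H z = H := by unfold pb; omega
    have hb2 : pb H z2 = H := by omega
    have hR : Dw H (n+1) z z2 = Lw H n H + Ew H n 0 := by
      unfold Dw; rw [if_neg hne, Ew_succ, if_pos hm]
    rw [hR, hb]
    have : Dw H n (Img.r (pm H) (pb H) z 1) (Img.r (pm H) (pb H) z2 1) ≤ Ew H n 0 := by
      apply Dw_le0
      unfold Img.r pm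
      split_ifs <;> omega
    push_cast; linarith

def DL (H n s p : ℕ) : ℤ := if s = 0 then 0 else Dw H n (uS H (s-1)) (uS H (s-1+p))

lemma DL_nonneg (H n s p : ℕ) : 0 ≤ DL H n s p := by
  unfold DL; split_ifs
  · rfl
  · exact Dw_nonneg _ _ _ _

lemma u_adj (H x : ℕ) (hH : 1 ≤ H) (h1 : uS H x ≠ 0) (h2 : uS H (x+1) ≠ 0) :
    uS H x = H ∧ uS H (x+1) = H ∧ uS H (x+2) = 0 := by
  have I := img_u H hH
  obtain ⟨n, t, rfl, ht⟩ := I.loc x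
  have ht0 : 0 < t := by
    rcases Nat.eq_zero_or_pos t with h | h
    · rw [h, add_zero, I.v0] at h1; exact absurd rfl h1
    · exact h
  have htm : t < pm H (uS H n) := by
    by_contra hc
    apply h2
    rw [show uR H n + t + 1 = uR H (n+1) by rw [I.s]; omega, I.v0]
  have hle := uS_le H hH n
  have hpm : pm H (uS H n) = 2 ∧ uS H n = H := by
    unfold pm at htm ⊢
    split_ifs at htm ⊢ <;> omega
  have hpb : pb H (uS H n) = H := by unfold pb; omega
  refine ⟨?_, ?_, ?_⟩
  · rw [show uR H n + t = uR H n + 1 + (t-1) by omega, I.vb _ _ (by omega), hpb]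
  · rw [show uR H n + t + 1 = uR H n + 1 + t by omega, I.vb _ _ (by omega), hpb]
  · rw [show uR H n + t + 2 = uR H (n+1) by rw [I.s]; omega, I.v0]

lemma Dw_adj (H n x : ℕ) (hH : 1 ≤ H) : Dw H n (uS H x) (uS H (x+1)) ≤ Ew H n 0 := by
  apply Dw_le0
  by_cases h1 : uS H x = 0
  · exact Or.inl h1
  · by_cases h2 : uS H (x+1) = 0
    · exact Or.inr (Or.inl h2)
    · have := u_adj H x hH h1 h2
      right; right; omega

lemma stepR (H n c p p' e : ℕ) (hH : 1 ≤ H) (h1 : uR H c < e) (h2 : e ≤ uR H (c+1))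
    (hρ : uR H (c+p') = uR H c + p) (heq : ∀ x, uR H c ≤ x → x < e → uS H x = uS H (x+p)) :
    ∃ e', c ≤ e' ∧ (∀ x, c ≤ x → x < e' → uS H x = uS H (x+p')) ∧
      PSw H n e + Dw H n (uS H e) (uS H (e+p)) ≤
        PSw H (n+1) e' + Lw H n 0 + Dw H (n+1) (uS H e') (uS H (e'+p')) := by
  have I := img_u H hH
  have hs := I.s c
  have hs' := I.s (c+p')
  obtain ⟨t, rfl⟩ : ∃ t, e = uR H c + 1 + t := ⟨e - uR H c - 1, by omega⟩
  have ht : t ≤ pm H (uS H c) := by omega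
  have hb : uR H (c+p') + t < uR H (c+p'+1) := by
    apply I.between (by omega)
    intro y h3 h4
    have := heq (y - p) (by omega) (by omega)
    rw [show y - p + p = y by omega] at this
    rw [← this, I.nz' c _ (by omega) (by omega)]
    exact I.hb _
  have ht2 : t ≤ pm H (uS H (c+p')) := by omega
  rw [I.right c t ht, show uR H c + 1 + t + p = uR H (c+p') + 1 + t by omega, I.right _ t ht2]
  by_cases hz : uS H c = uS H (c+p')
  · refine ⟨c+1, by omega, ?_, ?_⟩
    · intro x h3 h4
      rw [show x = c by omega]; exact hz
    · rw [hz, Dw_self]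
      have a1 := PSw_mono H n (uR H c + 1 + t) (uR H (c+1)) h2
      rw [PSw_img H n _ hH] at a1
      have a2 := Dw_nonneg H (n+1) (uS H (c+1)) (uS H (c+1+p'))
      have a3 := Lw_pos H n 0
      linarith
  · refine ⟨c, le_rfl, fun x h3 h4 => by omega, ?_⟩
    rw [PSw_blk H n c t hH ht, PSw_img H n _ hH]
    have := Dw_tail H n (uS H c) (uS H (c+p')) t hH (uS_le H hH _) (uS_le H hH _) hz ht ht2 (by
      intro h
      have := heq (uR H c + 1) (by omega) (by omega)
      rwa [I.nz' c (uR H c + 1) (by omega) (by omega), show uR H c + 1 + p = uR H (c+p') + 1 by omega,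
        I.nz' (c+p') (uR H (c+p') + 1) (by omega) (by omega)] at this)
    linarith

lemma stepL (H n c p p' s : ℕ) (hH : 1 ≤ H) (h1 : s ≤ uR H c) (h2 : c = 0 ∨ uR H (c-1) < s)
    (hρ : uR H (c+p') = uR H c + p) (heq : ∀ x, s ≤ x → x < uR H c → uS H x = uS H (x+p)) :
    ∃ s', s' ≤ c ∧ (∀ x, s' ≤ x → x < c → uS H x = uS H (x+p')) ∧
      PSw H (n+1) s' + DL H n s p ≤ PSw H n s + DL H (n+1) s' p' ∧
      PSw H (n+1) (s'+p') - PSw H (n+1) s' = PSw H n (s+p) - PSw H n s := by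
  have I := img_u H hH
  have sh := PSw_shift H n s (uR H c) p h1 heq
  rw [← hρ, PSw_img H n _ hH, PSw_img H n _ hH] at sh
  rcases c with _ | c
  · rw [I.z] at h1
    obtain rfl : s = 0 := by omega
    refine ⟨0, le_rfl, fun x h3 h4 => by omega, ?_, sh⟩
    simp [DL, PSw]
  · have hcs : uR H c < s := by
      rcases h2 with h | h
      · omega
      · exact h
    have hs := I.s c
    have hs' := I.s (c+p')
    rw [show c + 1 + p' = c + p' + 1 by omega] at hρ sh
    obtain ⟨τ, hτ⟩ : ∃ τ, s + τ = uR H (c+1) := ⟨uR H (c+1) - s, by omega⟩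
    have ht : τ ≤ pm H (uS H c) := by omega
    have hb : uR H (c+p') < s + p := by
      apply I.before (by omega)
      intro y h3 h4
      have := heq (y - p) (by omega) (by omega)
      rw [show y - p + p = y by omega] at this
      rw [← this, I.nz' c _ (by omega) (by omega)]
      exact I.hb _
    have ht2 : τ ≤ pm H (uS H (c+p')) := by omega
    have hDL : DL H n s p = Dw H n (Img.r (pm H) (pb H) (uS H c) τ) (Img.r (pm H) (pb H) (uS H (c+p')) τ) := by
      unfold DL
      rw [if_neg (by omega), I.left c τ (s-1) ht (by omega), I.left (c+p') τ (s-1+p) ht2 (by omega)]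
    rw [hDL]
    by_cases hz : uS H c = uS H (c+p')
    · have heq' : ∀ x, c ≤ x → x < c + 1 → uS H x = uS H (x+p') := by
        intro x h3 h4
        rw [show x = c by omega]; exact hz
      refine ⟨c, by omega, heq', ?_, ?_⟩
      · rw [hz, Dw_self]
        have a1 := PSw_mono H n (uR H c) s hcs.le
        rw [PSw_img H n _ hH] at a1
        have a2 := DL_nonneg H (n+1) c p'
        linarith
      · have := PSw_shift H (n+1) c (c+1) p' (by omega) heq'
        rw [show c + 1 + p' = c + p' + 1 by omega] at this
        linarith
    · refine ⟨c+1, le_rfl, fun x h3 h4 => by omega, ?_, ?_⟩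
      · have := Dw_tail H n (uS H c) (uS H (c+p')) τ hH (uS_le H hH _) (uS_le H hH _) hz ht ht2 (by
          intro h
          have := heq (uR H (c+1) - 1) (by omega) (by omega)
          rwa [I.nz' c (uR H (c+1) - 1) (by omega) (by omega),
            I.nz' (c+p') (uR H (c+1) - 1 + p) (by omega) (by omega)] at this)
        have e1 := PSw_blk H n c (pm H (uS H c)) hH le_rfl
        have e2 := PSw_blk H n c (pm H (uS H c) - τ) hH (by omega)
        rw [← I.s, PSw_img H n _ hH] at e1
        rw [show uR H c + 1 + (pm H (uS H c) - τ) = s by omega, Nat.cast_sub ht] at e2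
        unfold DL
        rw [if_neg (by omega), show c + 1 - 1 = c by omega]
        linarith
      · rw [show c + 1 + p' = c + p' + 1 by omega]
        exact sh

lemma baseB (H : ℕ) (N : ℤ) (hN : Num H N) (p s e n : ℕ) (hp : 1 ≤ p) (hse : s ≤ e)
    (heq : ∀ x, s ≤ x → x < e → uS H x = uS H (x+p)) (hnz : ∀ x, s ≤ x → x < e → uS H x ≠ 0) :
    N * (PSw H n e - PSw H n s + Sw H n + DL H n s p + Dw H n (uS H e) (uS H (e+p))) ≤
      (N+1) * (PSw H n (s+p) - PSw H n s) := by
  have hH := hN.hH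
  have hN1 := hN.hN
  have f4 := hN.f4 n
  have f5 := hN.f5 n
  have hY := Lw_pos H n 0
  have he0 := Ew_nonneg H n 0
  have hS := Sw_le H n hH
  have hLY : ∀ x, Lw H n 0 ≤ Lw H n (uS H x) := fun x => Lw_mono H n _ _ (by omega) (uS_le H hH x)
  -- generic conclusion
  have concl : ∀ w P dl dr : ℤ, dl ≤ Ew H n 0 → dr ≤ Ew H n 0 → 0 ≤ w → w + Lw H n 0 ≤ P →
      N * (w + Sw H n + dl + dr) ≤ (N+1) * P := by
    intro w P dl dr h1 h2 h3 h4
    have a1 : N * (w + Sw H n + dl + dr) ≤ N * (w + (Sw H n + 2 * Ew H n 0)) :=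
      mul_le_mul_of_nonneg_left (by linarith) (by linarith)
    have a2 : (N+1) * (w + Lw H n 0) ≤ (N+1) * P := mul_le_mul_of_nonneg_left h4 (by linarith)
    nlinarith
  have hmid : ∀ z0, s ≤ z0 → z0 < s + p → PSw H n z0 + Lw H n (uS H z0) ≤ PSw H n (s+p) := by
    intro z0 _ h2
    have := PSw_mono H n (z0+1) (s+p) (by omega)
    rwa [PSw_succ] at this
  rcases eq_or_lt_of_le hse with rfl | hlt
  · rw [sub_self, zero_add]
    rcases eq_or_lt_of_le hp with rfl | hp2
    · have h1 := Dw_adj H n s hH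
      have h2 : DL H n s 1 ≤ Ew H n 0 := by
        unfold DL; split_ifs with h
        · exact he0
        · exact Dw_adj H n _ hH
      have := concl 0 (PSw H n (s+1) - PSw H n s) _ _ h2 h1 le_rfl
        (by rw [PSw_succ]; have := hLY s; linarith)
      simpa using this
    · have hlast := hmid (s+p-1) (by omega) (by omega)
      have hDR := Dw_leL H n (uS H s) (uS H (s+p)) (uS_le H hH _) (uS_le H hH _)
      have hDLle : DL H n s p ≤ Lw H n (uS H (s+p-1)) := by
        unfold DL; split_ifs with h
        · exact (Lw_pos _ _ _).le
        · rw [show s - 1 + p = s + p - 1 by omega]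
          exact Dw_leR H n _ _ (uS_le H hH _) (uS_le H hH _)
      have hfirst := PSw_succ H n s
      have hDL0 := DL_nonneg H n s p
      have hDR0 := Dw_nonneg H n (uS H s) (uS H (s+p))
      have hm1 := PSw_mono H n (s+1) (s+p-1) (by omega)
      by_cases hs0 : uS H s = 0
      · have h1 : Dw H n (uS H s) (uS H (s+p)) ≤ Ew H n 0 := Dw_le0 _ _ _ _ (Or.inl hs0)
        rw [hs0] at hfirst
        have := concl (DL H n s p) (PSw H n (s+p) - PSw H n s) 0 _ he0 h1 hDL0 (by linarith)
        linarith
      · by_cases hl0 : uS H (s+p-1) = 0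
        · have h1 : DL H n s p ≤ Ew H n 0 := by
            unfold DL; split_ifs with h
            · exact he0
            · rw [show s - 1 + p = s + p - 1 by omega]
              exact Dw_le0 _ _ _ _ (Or.inr (Or.inl hl0))
          rw [hl0] at hlast
          have := concl (Dw H n (uS H s) (uS H (s+p))) (PSw H n (s+p) - PSw H n s) _ 0 h1 he0 hDR0
            (by linarith)
          linarith
        · by_cases hz : ∃ z0, s < z0 ∧ z0 < s + p - 1 ∧ uS H z0 = 0
          · obtain ⟨z0, z1, z2, z3⟩ := hz
            have b1 := PSw_mono H n (s+1) z0 (by omega)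
            have b2 := PSw_mono H n (z0+1) (s+p-1) (by omega)
            rw [PSw_succ, z3] at b2
            have b3 : DL H n s p + Dw H n (uS H s) (uS H (s+p)) + Sw H n ≤
              PSw H n (s+p) - PSw H n s := by linarith
            have b4 := mul_le_mul_of_nonneg_left b3 (show 0 ≤ N by linarith)
            have b5 : 0 ≤ PSw H n (s+p) - PSw H n s := by
              have := PSw_mono H n s (s+p) (by omega)
              linarith
            linarith
          · push Not at hz
            have hnz1 : uS H (s+1) ≠ 0 := by
              rcases Nat.lt_or_ge (s+1) (s+p-1) with h | h
              · exact hz _ (by omega) h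
              · rw [show s + 1 = s + p - 1 by omega]; exact hl0
            have h3 := u_adj H s hH hs0 hnz1
            have hp2' : p = 2 := by
              by_contra hc
              rcases Nat.lt_or_ge (s+2) (s+p-1) with h | h
              · exact hz _ (by omega) h h3.2.2
              · exact hl0 (by rw [show s + p - 1 = s + 2 by omega]; exact h3.2.2)
            subst hp2'
            have h1 : Dw H n (uS H s) (uS H (s+2)) ≤ Ew H n 0 := Dw_le0 _ _ _ _ (Or.inr (Or.inl h3.2.2))
            have h2 : DL H n s 2 ≤ Ew H n 0 := by
              unfold DL; split_ifs with h
              · exact he0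
              · apply Dw_le0
                by_cases hq : uS H (s-1) = 0
                · exact Or.inl hq
                · exfalso
                  have := u_adj H (s-1) hH hq (by rwa [show s - 1 + 1 = s by omega])
                  rw [show s - 1 + 2 = s + 1 by omega] at this
                  exact hnz1 this.2.2
            have hh := hLY s
            have hh2 := Lw_pos H n (uS H (s+2-1))
            have := concl 0 (PSw H n (s+2) - PSw H n s) _ _ h2 h1 le_rfl (by linarith)
            simpa using this
  · have hs0 := hnz s le_rfl hlt
    have hsp := heq s le_rfl hlt
    have hsp0 : uS H (s+p) ≠ 0 := by rw [← hsp]; exact hs0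
    have hDL : DL H n s p ≤ Ew H n 0 := by
      unfold DL; split_ifs with h
      · exact he0
      · apply Dw_le0
        by_cases h1 : uS H (s-1) = 0
        · exact Or.inl h1
        · by_cases h2 : uS H (s-1+p) = 0
          · exact Or.inr (Or.inl h2)
          · have a1 := u_adj H (s-1) hH h1 (by rwa [show s - 1 + 1 = s by omega])
            have a2 := u_adj H (s-1+p) hH h2 (by rwa [show s - 1 + p + 1 = s + p by omega])
            right; right; omega
    have hDR : Dw H n (uS H e) (uS H (e+p)) ≤ Ew H n 0 := by
      apply Dw_le0
      have g1 := hnz (e-1) (by omega) (by omega)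
      have g2 := heq (e-1) (by omega) (by omega)
      by_cases h1 : uS H e = 0
      · exact Or.inl h1
      · by_cases h2 : uS H (e+p) = 0
        · exact Or.inr (Or.inl h2)
        · have a1 := u_adj H (e-1) hH g1 (by rwa [show e - 1 + 1 = e by omega])
          have a2 := u_adj H (e-1+p) hH (by rwa [← g2]) (by rwa [show e - 1 + p + 1 = e + p by omega])
          rw [show e - 1 + 1 = e by omega] at a1
          rw [show e - 1 + p + 1 = e + p by omega] at a2
          right; right; omega
    rcases eq_or_lt_of_le hp with rfl | hp2
    · have h3 := u_adj H s hH hs0 hsp0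
      have he1 : e = s + 1 := by
        by_contra hc
        have := heq (s+1) (by omega) (by omega)
        rw [show s + 1 + 1 = s + 2 by omega, h3.2.2] at this
        exact hsp0 this
      subst he1
      have := PSw_succ H n s
      rw [h3.1] at this
      rw [this]
      have a1 : N * (PSw H n s + Lw H n H - PSw H n s + Sw H n + DL H n s 1 + Dw H n (uS H (s+1)) (uS H (s+1+1)))
        ≤ N * (Lw H n H + (Sw H n + 2 * Ew H n 0)) :=
        mul_le_mul_of_nonneg_left (by linarith) (by linarith)
      linarith
    · obtain ⟨z0, z1, z2, z3⟩ : ∃ z0, s ≤ z0 ∧ z0 < s + p ∧ uS H z0 = 0 := by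
        by_contra hc
        push Not at hc
        have h3 := u_adj H s hH hs0 (hc _ (by omega) (by omega))
        rcases Nat.lt_or_ge 2 p with h | h
        · exact hc (s+2) (by omega) (by omega) h3.2.2
        · rw [show p = 2 by omega] at hsp0
          exact hsp0 h3.2.2
      have hez : e ≤ z0 := by
        by_contra hc
        exact hnz z0 z1 (by omega) z3
      have b1 := hmid z0 z1 z2
      rw [z3] at b1
      have b2 := PSw_mono H n e z0 hez
      have b3 := PSw_mono H n s e hse
      exact concl _ _ _ _ hDL hDR (by linarith) (by linarith)

lemma borderB (H : ℕ) (N : ℤ) (hN : Num H N) (p : ℕ) : ∀ s e n, 1 ≤ p → s ≤ e →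
    (∀ x, s ≤ x → x < e → uS H x = uS H (x+p)) →
    N * (PSw H n e - PSw H n s + Sw H n + DL H n s p + Dw H n (uS H e) (uS H (e+p))) ≤
      (N+1) * (PSw H n (s+p) - PSw H n s) := by
  induction p using Nat.strong_induction_on with
  | _ p ih =>
    intro s e n hp hse heq
    by_cases hz : ∃ x, s ≤ x ∧ x < e ∧ uS H x = 0
    · have hH := hN.hH
      have I := img_u H hH
      obtain ⟨c, j, p', q1, q2, q3, q4, q5, q6, q7, q8⟩ := I.blocks hp heq hz
      have hcj : uR H c ≤ uR H (c+j) := I.le_iff.2 (by omega)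
      obtain ⟨e', r1, r2, r3⟩ := stepR H n (c+j) p p' e hH q4 q5 (q7 j le_rfl)
        (fun x h1 h2 => heq x (by omega) h2)
      obtain ⟨s', l1, l2, l3, l4⟩ := stepL H n c p p' s hH q3 q6 (by simpa using q7 0 (by omega))
        (fun x h1 h2 => heq x h1 (by omega))
      have key := ih p' q2 s' e' (n+1) q1 (by omega) (by
        intro x h1 h2
        rcases Nat.lt_or_ge x c with h3 | h3
        · exact l2 x h1 h3
        · rcases Nat.lt_or_ge x (c+j) with h4 | h4
          · have := q8 (x-c) (by omega)
            rwa [show c + (x-c) = x by omega] at this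
          · exact r2 x h4 h2)
      rw [l4] at key
      refine le_trans (mul_le_mul_of_nonneg_left ?_ (by have := hN.hN; linarith)) key
      simp only [Sw]
      linarith
    · push Not at hz
      exact baseB H N hN p s e n hp hse heq hz

lemma PSw_bet (H x : ℕ) : PSw H 0 x = (betR (uS H) x : ℤ) := by
  induction x with
  | zero => simp [PSw, betR]
  | succ x ih =>
    rw [PSw_succ, ih]
    simp only [betR, Finset.sum_range_succ, Lw]
    push_cast; ring

/-- the bound on borders in the final sequence -/
lemma borderV (H : ℕ) (N : ℕ) (hN : Num H N) (p s e : ℕ) (hp : 1 ≤ p) (hse : s ≤ e)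
    (heq : ∀ x, s ≤ x → x < e → betS (uS H) x = betS (uS H) (x+p)) :
    N * (e - s) ≤ (N+1) * p + N * (2*H+3) := by
  have hH := hN.hH
  have I := img_bet (uS H)
  by_cases hz : ∃ x, s ≤ x ∧ x < e ∧ betS (uS H) x = 0
  · obtain ⟨c, j, p', q1, q2, q3, q4, q5, q6, q7, q8⟩ := I.blocks hp heq hz
    have key := borderB H N hN p' c (c+j) 0 q1 (by omega) (by
      intro x h1 h2
      have := q8 (x-c) (by omega)
      rwa [show c + (x-c) = x by omega] at this)
    have h1 := DL_nonneg H 0 c p'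
    have h2 := Dw_nonneg H 0 (uS H (c+j)) (uS H (c+j+p'))
    have h7 := q7 0 (by omega)
    simp only [add_zero] at h7
    rw [PSw_bet, PSw_bet, PSw_bet, h7] at key
    have hs := I.s (c+j)
    have hu := uS_le H hH (c+j)
    have hl : betR (uS H) c ≤ s + (H+1) := by
      rcases q6 with rfl | h
      · rw [I.z]; omega
      · rcases Nat.eq_zero_or_pos c with h0 | h0
        · rw [h0, I.z]; omega
        · have hs2 := I.s (c-1)
          rw [show c - 1 + 1 = c by omega] at hs2
          have := uS_le H hH (c-1)
          omega
    have hfin : e - s ≤ (betR (uS H) (c+j) - betR (uS H) c) + (2*H+3) := by omega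
    have hmono : betR (uS H) c ≤ betR (uS H) (c+j) := I.le_iff.2 (by omega)
    have hk : N * (betR (uS H) (c+j) - betR (uS H) c) ≤ (N+1) * p := by
      zify [hmono]
      have : (N:ℤ) * ((betR (uS H) (c+j) : ℤ) - betR (uS H) c) ≤ N * ((betR (uS H) (c+j) : ℤ) - betR (uS H) c + Sw H 0 + DL H 0 c p' + Dw H 0 (uS H (c+j)) (uS H (c+j+p'))) := by
        apply mul_le_mul_of_nonneg_left _ (by positivity)
        have := Sw_nonneg H 0
        linarith
      push_cast at key
      linarith
    calc N * (e - s) ≤ N * ((betR (uS H) (c+j) - betR (uS H) c) + (2*H+3)) := Nat.mul_le_mul_left _ hfin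
      _ ≤ _ := by rw [mul_add]; omega
  · push Not at hz
    obtain ⟨c, t, h1, h2⟩ := I.loc s
    have hs := I.s c
    have hu := uS_le H hH c
    have hu2 := uS_le H hH (c+1)
    have hs2 := I.s (c+1)
    have : e - s ≤ 2*H+3 := by
      by_contra hc
      exact hz (betR (uS H) (c+1)) (by omega) (by omega) (I.v0 _)
    have := Nat.mul_le_mul_left N this
    omega



lemma flat_get (v : List A) (n i : ℕ) (h : i < n * v.length) :
    ((List.replicate n v).flatten)[i]? = v[i % v.length]? := by
  induction n generalizing i with
  | zero => simp at h
  | succ n ih =>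
    rw [List.replicate_succ, List.flatten_cons]
    by_cases hi : i < v.length
    · rw [List.getElem?_append_left hi, Nat.mod_eq_of_lt hi]
    · push Not at hi
      rw [List.getElem?_append_right hi, ih _ (by rw [Nat.succ_mul] at h; omega),
        Nat.mod_eq_sub_mod hi]

lemma pow_len (v : List A) (hv : v ≠ []) (k : ℕ) : (powPref v k).length = k := by
  have : 1 ≤ v.length := List.length_pos_iff.2 hv
  unfold powPref
  simp
  nlinarith

lemma pow_get (v : List A) (hv : v ≠ []) (k i : ℕ) (hi : i < k) :
    (powPref v k)[i]? = v[i % v.length]? := by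
  have : 1 ≤ v.length := List.length_pos_iff.2 hv
  unfold powPref
  rw [List.getElem?_take_of_lt hi, flat_get v k i (by nlinarith)]

lemma seg_get? (f : ℕ → A) (i n t : ℕ) (h : t < n) : (seg f i n)[t]? = some (f (i+t)) := by
  rw [List.getElem?_eq_getElem (by simpa using h), seg_get]

lemma pow_period {f : ℕ → A} {v : List A} (hv : v ≠ []) {k j : ℕ} (h : OccursAt (powPref v k) f j)
    (x : ℕ) (h1 : j ≤ x) (h2 : x + v.length < j + k) : f x = f (x + v.length) := by
  rw [occ_iff, pow_len v hv] at h
  obtain ⟨t, rfl⟩ := Nat.exists_eq_add_of_le h1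
  have e1 := pow_get v hv k t (by omega)
  have e2 := pow_get v hv k (t + v.length) (by omega)
  rw [h, seg_get? _ _ _ _ (by omega)] at e1 e2
  rw [Nat.add_mod_right, ← e1] at e2
  have := Option.some.inj e2
  rw [← this, add_assoc]

lemma period_pow {f : ℕ → A} {i p k : ℕ} (hp : 1 ≤ p)
    (h : ∀ x, i ≤ x → x + p < i + k → f x = f (x+p)) : IsFactorS (powPref (seg f i p) k) f := by
  have hv : seg f i p ≠ [] := by
    intro h0
    have := congrArg List.length h0
    simp at this; omega
  have key : ∀ t, t < k → f (i+t) = f (i + t % p) := by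
    intro t
    induction t using Nat.strong_induction_on with
    | _ t ih =>
      intro ht
      by_cases htp : t < p
      · rw [Nat.mod_eq_of_lt htp]
      · have h1 := h (i + (t-p)) (by omega) (by omega)
        have h2 := ih (t-p) (by omega) (by omega)
        rw [Nat.mod_eq_sub_mod (by omega : t ≥ p), ← h2, h1]
        congr 1; omega
  refine ⟨i, ?_⟩
  rw [occ_iff, pow_len _ hv]
  apply List.ext_getElem?
  intro t
  by_cases ht : t < k
  · rw [pow_get _ hv _ _ ht, seg_get? _ _ _ _ ht, seg_length, seg_get? _ _ _ _ (Nat.mod_lt _ (by omega)), key t ht]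
  · rw [List.getElem?_eq_none (by rw [pow_len _ hv]; omega), List.getElem?_eq_none (by simp; omega)]

lemma exp_bound (d : ℕ) (hd : 2 ≤ d) (H N : ℕ) (hN1 : 1 ≤ N) (hN : Num H N) (n : ℕ) (x : ℝ)
    (hx : x ∈ expSet (finS d hd H) n) :
    x ≤ 2 + 1/(N:ℝ) + (2*H+3 : ℝ) / (max n 1 : ℕ) := by
  obtain ⟨v, k, hv, hn, ⟨j, hj⟩, rfl⟩ := hx
  have hp : 1 ≤ v.length := List.length_pos_iff.2 hv
  set p := v.length with hpd
  have hN0 : (0:ℝ) < N := by exact_mod_cast hN1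
  have hp0 : (0:ℝ) < p := by exact_mod_cast hp
  have hmx : (2*H+3 : ℝ) / p ≤ (2*H+3 : ℝ) / (max n 1 : ℕ) := by
    apply div_le_div_of_nonneg_left (by positivity)
    · have : 1 ≤ max n 1 := le_max_right _ _
      exact_mod_cast this
    · exact_mod_cast max_le hn hp
  have main : N * (k - p) ≤ (N+1) * p + N * (2*H+3) := by
    by_cases hkp : k ≤ p
    · rw [Nat.sub_eq_zero_of_le hkp]; simp
    · have := borderV H N hN p j (j + (k-p)) hp (by omega) (fun x h1 h2 =>
        (finS_iff d hd H _ _).1 (pow_period hv hj x h1 (by omega)))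
      simpa using this
  have m2 : (N:ℝ) * (k - p) ≤ (N+1)*p + N*(2*H+3) := by
    have h1 : ((k:ℝ) - p) ≤ ((k - p : ℕ) : ℝ) := by
      have : k ≤ (k-p) + p := by omega
      have : (k:ℝ) ≤ ((k-p:ℕ):ℝ) + p := by exact_mod_cast this
      linarith
    have h2 : (N:ℝ) * ((k - p : ℕ):ℝ) ≤ (N+1)*p + N*(2*H+3) := by exact_mod_cast main
    nlinarith
  have : (k:ℝ)/p ≤ 2 + 1/(N:ℝ) + (2*H+3 : ℝ)/p := by
    rw [show (2 + 1/(N:ℝ) + (2*H+3 : ℝ)/p) = ((N*p) + ((N+1)*p + N*(2*H+3)))/(N*p) by field_simp; ring]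
    rw [div_le_div_iff₀ hp0 (by positivity)]
    nlinarith
  linarith

lemma part2 (d : ℕ) (hd : 2 ≤ d) (ε : ℝ) (hε : 0 < ε) : ∃ u : ℕ → Fin d, Recurrent u ∧ RichSeq u ∧
      acritExp u < ((2 + ε : ℝ) : EReal) := by
  obtain ⟨N, hN⟩ := exists_nat_gt (2/ε)
  have hN0 : (0:ℝ) < N := lt_trans (by positivity) hN
  have hN1 : 1 ≤ N := by exact_mod_cast hN0
  obtain ⟨q, hq⟩ := exists_num N hN1
  set H := 2*q
  have hNe : 1/(N:ℝ) < ε/2 := by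
    rw [div_lt_iff₀ hε] at hN
    rw [div_lt_iff₀ hN0]; nlinarith
  refine ⟨finS d hd H, finS_rec d hd H (by exact_mod_cast hq.hH), finS_rich d hd H (by exact_mod_cast hq.hH), ?_⟩
  have sb : ∀ n, sSup ((fun x : ℝ => (x : EReal)) '' expSet (finS d hd H) n) ≤
      ((2 + 1/(N:ℝ) + (2*H+3 : ℝ) / (max n 1 : ℕ) : ℝ) : EReal) := by
    intro n
    apply sSup_le
    rintro _ ⟨x, hx, rfl⟩
    exact EReal.coe_le_coe_iff.2 (exp_bound d hd H N hN1 hq n x hx)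
  have hne : critExp (finS d hd H) ≠ ⊤ := ne_of_lt (lt_of_le_of_lt (sb 0) (EReal.coe_lt_top _))
  unfold acritExp
  rw [if_neg hne]
  obtain ⟨n, hn⟩ := exists_nat_gt ((2*H+3 : ℝ)/(ε/2))
  refine lt_of_le_of_lt (iInf_le _ n) (lt_of_le_of_lt (sb n) ?_)
  rw [EReal.coe_lt_coe_iff]
  have hn0 : (0:ℝ) < n := lt_of_le_of_lt (by positivity) hn
  have : max n 1 = n := max_eq_left (by exact_mod_cast hn0)
  rw [this]
  have : (2*H+3 : ℝ) / n < ε/2 := by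
    rw [div_lt_iff₀ (by positivity)] at hn
    rw [div_lt_iff₀ hn0]; nlinarith
  linarith



lemma rich_suffix {f : ℕ → A} (h : RichSeq f) (n : ℕ) : ∃ s, s ≤ n ∧
    (∀ x, s ≤ x → x ≤ n → f x = f (s + n - x)) ∧
    (∀ i, i < s → ∃ t, t ≤ n - s ∧ f (i+t) ≠ f (s+t)) := by
  have r : ∀ k, (palSet (seg f 0 k)).ncard = k + 1 := by
    intro k
    have := h (seg f 0 k) ⟨0, by rw [occ_iff, seg_length]⟩
    unfold RichWord at this
    rwa [palCount_eq, seg_length] at this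
  obtain ⟨p, hp, hnp⟩ := Set.exists_mem_notMem_of_ncard_lt_ncard
    (s := palSet (seg f 0 n)) (t := palSet (seg f 0 (n+1))) (by rw [r, r]; omega)
    (Set.finite_of_ncard_pos (by rw [r]; omega))
  obtain ⟨hp1, hp2⟩ := hp
  rw [infix_seg] at hp1
  obtain ⟨s, -, hs, he⟩ := hp1
  have hn : ∀ i, i + p.length ≤ n → p ≠ seg f i p.length := by
    intro i hi hpe
    exact hnp ⟨infix_seg.2 ⟨i, by omega, by omega, hpe⟩, hp2⟩
  have hsn : s + p.length = n + 1 := by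
    by_contra hc
    exact hn s (by omega) he
  have hl : 1 ≤ p.length := by
    by_contra hc
    have h0 : p.length = 0 := by omega
    apply hn 0 (by omega)
    rw [List.length_eq_zero_iff.1 h0]; rfl
  refine ⟨s, by omega, ?_, ?_⟩
  · rw [he, seg_pal] at hp2
    intro x h1 h2
    have := hp2 (x - s) (by omega)
    convert this using 2 <;> omega
  · intro i hi
    by_contra hc
    push Not at hc
    apply hn i (by omega)
    rw [he, seg_length]
    exact (seg_ext.2 fun t ht => (hc t (by omega)).symm)

lemma square_exists {d : ℕ} {f : ℕ → Fin d} (hr : Recurrent f) (h : RichSeq f) (L : ℕ) :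
    ∃ i p k, 1 ≤ p ∧ L ≤ k ∧ 2 * p ≤ k ∧ ∀ x, i ≤ x → x + p < i + k → f x = f (x+p) := by
  choose s hle hpal hnew using rich_suffix h
  have hlong : ∀ n s', s' ≤ n → (∀ x, s' ≤ x → x ≤ n → f x = f (s' + n - x)) → s n ≤ s' := by
    intro n s' h1 h2
    by_contra hc
    push Not at hc
    obtain ⟨t, ht, hne⟩ := hnew n s' hc
    have := hle n
    apply hne
    rw [h2 (s'+t) (by omega) (by omega), hpal n (s n + t) (by omega) (by omega)]
    congr 1; omega
  have hstep : ∀ n, s n ≤ s (n+1) + 1 := by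
    intro n
    by_cases hc : s (n+1) + 1 ≤ n
    · apply hlong n _ hc
      intro x h1 h2
      rw [hpal (n+1) x (by omega) (by omega)]
      congr 1; omega
    · have := hle n
      omega
  have hinj : ∀ n n', n < n' → seg f (s n) (n+1-s n) ≠ seg f (s n') (n'+1-s n') := by
    intro n n' hnn he
    have hl := congrArg List.length he
    simp only [seg_length] at hl
    have h1 := hle n
    have h2 := hle n'
    obtain ⟨t, ht, hne⟩ := hnew n' (s n) (by omega)
    rw [← hl] at he
    exact hne (seg_ext.1 he t (by omega))
  obtain ⟨n0, hn0⟩ : ∃ n0, ∀ n, n0 ≤ n → s n + (L+2) ≤ n + 1 := by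
    have hfin := List.finite_length_le (Fin d) (L+2)
    have hf2 : ((fun n => seg f (s n) (n+1-s n)) ⁻¹' {l | l.length ≤ L+2}).Finite := by
      apply hfin.preimage
      intro n _ n' _ he
      rcases lt_trichotomy n n' with h1 | h1 | h1
      · exact absurd he (hinj _ _ h1)
      · exact h1
      · exact absurd he.symm (hinj _ _ h1)
    obtain ⟨B, hB⟩ := hf2.bddAbove
    refine ⟨B+1, fun n hn => ?_⟩
    by_contra hc
    have : n ≤ B := hB (by simp; omega)
    omega
  obtain ⟨n1, hn1, hch⟩ : ∃ n1, n0 ≤ n1 ∧ s (n1+1) + 1 ≠ s n1 := by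
    by_contra hc
    push Not at hc
    have : ∀ k, s (n0 + k) + k = s n0 := by
      intro k
      induction k with
      | zero => simp
      | succ k ih =>
        have := hc (n0+k) (by omega)
        rw [show n0 + (k+1) = n0 + k + 1 from rfl]; omega
    have := this (s n0 + 1)
    omega
  -- (A)
  have hA : ∃ n, n1 < n ∧ s n ≤ s n1 := by
    have hl1 := hle n1
    have hex : ∃ j, s n1 < j ∧ ∀ t, t < n1 + 1 - s n1 → f (j+t) = f (s n1 + t) := by
      obtain ⟨j, hj, ho⟩ := hr (seg f (s n1) (n1+1-s n1)) ⟨s n1, by rw [occ_iff, seg_length]⟩ (s n1 + 1)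
      rw [occ_iff, seg_length, seg_ext] at ho
      exact ⟨j, by omega, fun t ht => (ho t ht).symm⟩
    classical
    set j := Nat.find hex with hjd
    obtain ⟨hj1, hj2⟩ := Nat.find_spec hex
    rw [← hjd] at hj1 hj2
    have hmin : ∀ i, i < j → ¬ (s n1 < i ∧ ∀ t, t < n1 + 1 - s n1 → f (i+t) = f (s n1 + t)) :=
      fun i hi => Nat.find_min hex hi
    clear_value j
    obtain ⟨n2, hn2⟩ : ∃ n2, n2 = j + (n1 - s n1) := ⟨_, rfl⟩
    refine ⟨n2, by omega, ?_⟩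
    by_contra hc
    push Not at hc
    have hl2 := hle n2
    have hsj : s n2 < j := by
      by_contra hc2
      obtain ⟨t, ht, hne⟩ := hnew n2 (s n1 + (s n2 - j)) (by omega)
      apply hne
      have := hj2 (s n2 - j + t) (by omega)
      rw [add_assoc, ← this]
      congr 1; omega
    apply hmin _ hsj
    refine ⟨hc, fun t ht => ?_⟩
    rw [hpal n2 (s n2 + t) (by omega) (by omega), hpal n1 (s n1 + t) (by omega) (by omega)]
    have := hj2 (n1 - s n1 - t) (by omega)
    convert this using 2 <;> omega
  classical
  obtain ⟨n, ⟨hnn, hsn⟩, hmin⟩ : ∃ n, (n1 < n ∧ s n ≤ s n1) ∧ ∀ k, n1 < k → k < n → s n1 < s k := by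
    refine ⟨Nat.find hA, Nat.find_spec hA, fun k h1 h2 => ?_⟩
    have := Nat.find_min hA h2
    by_contra hc
    exact this ⟨h1, by omega⟩
  -- last change of center
  have hlast : ∀ k, ∀ n, n = n1 + 1 + k → ∃ m, n1 ≤ m ∧ m < n ∧ s (m+1) + 1 ≠ s m ∧
      s n + n = s (m+1) + (m+1) := by
    intro k
    induction k with
    | zero => rintro _ rfl; exact ⟨n1, by omega, by omega, hch, rfl⟩
    | succ k ih =>
      rintro _ rfl
      by_cases hc : s (n1+1+k+1) + 1 = s (n1+1+k)
      · obtain ⟨m, a1, a2, a3, a4⟩ := ih _ rfl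
        refine ⟨m, a1, by omega, a3, ?_⟩
        rw [show n1 + 1 + (k+1) = n1 + 1 + k + 1 from rfl]; omega
      · exact ⟨n1+1+k, by omega, by omega, hc, rfl⟩
  obtain ⟨m, hm1, hm2, hm3, hm4⟩ := hlast (n - n1 - 1) n (by omega)
  have hsm : s n1 ≤ s m := by
    rcases Nat.eq_or_lt_of_le hm1 with h1 | h1
    · rw [h1]
    · exact (hmin m h1 hm2).le
  have h5 := hstep m
  have h6 := hn0 m (by omega)
  have h7 := hn0 (m+1) (by omega)
  have h8 := hle m
  refine ⟨s m, s (m+1) + 1 - s m, (m + 1 - s m) + (s (m+1) + 1 - s m), by omega, by omega, by omega, ?_⟩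
  intro x hx1 hx2
  rw [hpal m x hx1 (by omega), hpal n (s m + m - x) (by omega) (by omega)]
  congr 1; omega

lemma part1 (d : ℕ) (u : ℕ → Fin d) (hr : Recurrent u) (h : RichSeq u) : (2 : EReal) ≤ acritExp u := by
  unfold acritExp
  split_ifs with hc
  · exact le_top
  · apply le_iInf
    intro n
    obtain ⟨r, hr1, -⟩ := EReal.lt_iff_exists_real_btwn.1 (lt_top_iff_ne_top.2 hc)
    obtain ⟨C, hC⟩ := exists_nat_gt r
    obtain ⟨i, p, k, hp, hk, h2, hper⟩ := square_exists hr h (C * n)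
    have hfac := period_pow (k := k) hp hper
    have hv : seg u i p ≠ [] := by
      intro h0
      have := congrArg List.length h0
      simp at this; omega
    have hp0 : (0:ℝ) < p := by exact_mod_cast hp
    have hpn : n ≤ p := by
      by_contra hlt
      push Not at hlt
      have hm : ((k:ℝ)/p) ∈ expSet u 0 := ⟨seg u i p, k, hv, by omega, hfac, by simp⟩
      have h3 : (((k:ℝ)/p : ℝ) : EReal) ≤ critExp u := le_sSup ⟨_, hm, rfl⟩
      have h4 := EReal.coe_lt_coe_iff.1 (lt_of_le_of_lt h3 hr1)
      rw [div_lt_iff₀ hp0] at h4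
      have h5 : C * p ≤ k := le_trans (Nat.mul_le_mul_left C hlt.le) hk
      have h6 : (C:ℝ) * p ≤ k := by exact_mod_cast h5
      nlinarith
    have hm : ((k:ℝ)/p) ∈ expSet u n := ⟨seg u i p, k, hv, by simpa using hpn, hfac, by simp⟩
    refine le_trans ?_ (le_sSup ⟨_, hm, rfl⟩)
    have : (2:ℝ) ≤ (k:ℝ)/p := by
      rw [le_div_iff₀ hp0]; exact_mod_cast h2
    exact EReal.coe_le_coe_iff.2 this



/-- The asymptotic repetition threshold of the class of recurrent rich
`d`-ary sequences equals `2`: every recurrent rich sequence over a `d`-letter alphabet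
has asymptotic critical exponent at least `2`, and for every `ε > 0` there is a recurrent
rich `d`-ary sequence with asymptotic critical exponent below `2 + ε`. -/
theorem statement0 (d : ℕ) (hd : 2 ≤ d) :
    (∀ u : ℕ → Fin d, Recurrent u → RichSeq u → (2 : EReal) ≤ acritExp u) ∧
    (∀ ε : ℝ, 0 < ε → ∃ u : ℕ → Fin d, Recurrent u ∧ RichSeq u ∧
      acritExp u < ((2 + ε : ℝ) : EReal)) := by
  exact ⟨part1 d, part2 d hd⟩
end RichRT
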